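/- arXiv:math-ph/0102029 — 2 statements merged into one kernel-verified Lean document; each statement's English description precedes it below -/
import Mathlib

section
/- Suppose q1 and q2 are continuous real-valued potentials on [0,1], a is an admissible boundary pulse, and u1, u2 are classical solutions of the heat problem for q1 and q2 respectively, with the same boundary data a. If the fluxes at the right endpoint agree, i.e. ∂x u1(1,t) = ∂x u2(1,t) for all t > 0, then q1 = q2 on [0,1]. -/
/-- An admissible boundary pulse: integrable on `(0,∞)`, vanishing beyond some
`T > 0`, and not almost everywhere zero. -/
def IsAdmissiblePulse (a : ℝ → ℝ) : Prop :=
  MeasureTheory.IntegrableOn a (Set.Ioi 0) ∧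
  (∃ T > (0:ℝ), ∀ t > T, a t = 0) ∧
  ¬ (a =ᵐ[MeasureTheory.volume.restrict (Set.Ioi 0)] 0)

/-- `u` (with partial derivatives `ux`, `uxx` in `x` and `ut` in `t`) is a
classical solution of `u_t = u_xx - q(x) u` on `[0,1] × (0,∞)` with zero initial
data, `u(0,t) = 0` and `u(1,t) = a(t)`. -/
def IsHeatSolution (q a : ℝ → ℝ) (u ux uxx ut : ℝ → ℝ → ℝ) : Prop :=
  ContinuousOn (fun p : ℝ × ℝ => u p.1 p.2) (Set.Icc 0 1 ×ˢ Set.Ici 0) ∧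
  (∀ t > (0:ℝ), ∀ x ∈ Set.Icc (0:ℝ) 1, HasDerivAt (fun y => u y t) (ux x t) x) ∧
  (∀ t > (0:ℝ), ∀ x ∈ Set.Icc (0:ℝ) 1, HasDerivAt (fun y => ux y t) (uxx x t) x) ∧
  (∀ t > (0:ℝ), ContinuousOn (fun x => uxx x t) (Set.Icc 0 1)) ∧
  (∀ x ∈ Set.Icc (0:ℝ) 1, ∀ t > (0:ℝ), HasDerivAt (fun s => u x s) (ut x t) t) ∧
  (∀ x ∈ Set.Icc (0:ℝ) 1, ContinuousOn (fun t => ut x t) (Set.Ioi 0)) ∧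
  (∀ x ∈ Set.Ioo (0:ℝ) 1, ∀ t > (0:ℝ), ut x t = uxx x t - q x * u x t) ∧
  (∀ x ∈ Set.Icc (0:ℝ) 1, u x 0 = 0) ∧
  (∀ t > (0:ℝ), u 0 t = 0 ∧ u 1 t = a t)

/-- Exponential growth bound `|u| + |u_x| ≤ C e^{c t}` on `[0,1] × [0,∞)`. -/
def HeatGrowthBound (u ux : ℝ → ℝ → ℝ) (C c : ℝ) : Prop :=
  ∀ x ∈ Set.Icc (0:ℝ) 1, ∀ t ∈ Set.Ici (0:ℝ), |u x t| + |ux x t| ≤ C * Real.exp (c * t)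

/-!
Reflect `x ↦ 1 - x` and let `φᵢ(·, s)` solve `φ'' = (qᵢ + s) φ` with `φ(0) = 0`, `φ'(0) = 1`.
Pairing `uᵢ` with `φᵢ` turns the heat equation, by Green's formula, into an ordinary differential
equation in `t` driven by the Cauchy data of `uᵢ` at `x = 1`. Multiplying by `exp (-s t)` and
integrating over `t` for large real `s`, the common flux can be eliminated, which leaves
`(φ₁ φ₂' - φ₂ φ₁')(1, s) * (ℒ a)(s) = 0`. By Lerch's theorem and continuity `ℒ a` is nonzero on some
interval, so the first factor, entire in `s`, vanishes identically: the two equations have the same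
Weyl function.

In terms of the solutions `Cᵢ`, `Sᵢ` based at the other endpoint, this says `S₁ C₂ = S₂ C₁` at `1`.
For each `x` the function `s ↦ S₁ C₂ - S₂ C₁` at `x` is then entire of order at most `1/2` and tends
to `0` along the imaginary axis, so it is zero by Phragmén–Lindelöf and Liouville. Hence
`C₁ / S₁ = C₂ / S₂` wherever both sides make sense. Differentiating gives `S₁² = S₂²`, hence equal
logarithmic derivatives `Sᵢ' / Sᵢ`, and their Riccati equations give equal potentials.
-/

namespace HeatInverse
open Set MeasureTheory Filter Topology

section Volterra

theorem isUnit_one_sub_of_norm_pow_lt_one {R : Type*} [NormedRing R] [HasSummableGeomSeries R]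
    {x : R} {n : ℕ} (hx : ‖x ^ n‖ < 1) : IsUnit (1 - x) := by
  have hcomm : Commute (1 - x) (∑ i ∈ Finset.range n, x ^ i) := by
    rw [Commute, SemiconjBy, mul_neg_geom_sum, geom_sum_mul_neg]
  have hunit := isUnit_one_sub_of_norm_lt_one hx
  rw [← mul_neg_geom_sum] at hunit
  exact (hcomm.isUnit_mul_iff.1 hunit).1

theorem hasDerivAt_integral_IccExtend (f : C(unitInterval, ℂ)) {x : ℝ} (hx : x ∈ Icc (0 : ℝ) 1) :
    HasDerivAt (fun x => ∫ t in (0 : ℝ)..x, IccExtend zero_le_one f t) (f ⟨x, hx⟩) x := by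
  rw [← IccExtend_of_mem zero_le_one f hx]
  exact (f.continuous.Icc_extend'.integral_hasStrictDerivAt 0 x).hasDerivAt

theorem norm_integral_IccExtend_le (f : C(unitInterval, ℂ)) (x : unitInterval) :
    ‖∫ t in (0 : ℝ)..x, IccExtend zero_le_one f t‖ ≤ ‖f‖ := by
  have hbound := intervalIntegral.norm_integral_le_of_norm_le_const (a := 0) (b := (x : ℝ))
    (f := IccExtend zero_le_one f) (C := ‖f‖) fun t _ => f.norm_coe_le_norm _
  rw [sub_zero, abs_of_nonneg x.2.1] at hbound
  exact hbound.trans (mul_le_of_le_one_right (norm_nonneg f) x.2.2)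

/-- Integration from `0`, as a bounded operator on `C([0,1])`. -/
noncomputable def primitive : C(unitInterval, ℂ) →L[ℂ] C(unitInterval, ℂ) :=
  LinearMap.mkContinuous
    { toFun f := ⟨fun x => ∫ t in (0 : ℝ)..x, IccExtend zero_le_one f t,
        (intervalIntegral.continuous_primitive
          (fun _ _ => f.continuous.Icc_extend'.intervalIntegrable _ _) 0).comp
          continuous_subtype_val⟩
      map_add' f g := by
        ext x
        exact intervalIntegral.integral_add (f.continuous.Icc_extend'.intervalIntegrable _ _)
          (g.continuous.Icc_extend'.intervalIntegrable _ _)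
      map_smul' c f := by
        ext x
        exact intervalIntegral.integral_smul c _ }
    1 fun f => by
      rw [one_mul, ContinuousMap.norm_le _ (norm_nonneg f)]
      exact norm_integral_IccExtend_le f

theorem norm_primitive_apply_le {f : C(unitInterval, ℂ)} {n : ℕ} {B : ℝ}
    (hf : ∀ x : unitInterval, ‖f x‖ ≤ B * (x : ℝ) ^ n / n.factorial) (x : unitInterval) :
    ‖primitive f x‖ ≤ B * (x : ℝ) ^ (n + 1) / (n + 1).factorial := by
  calc ‖primitive f x‖ ≤ ∫ t in (0 : ℝ)..x, B * t ^ n / n.factorial := by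
        refine intervalIntegral.norm_integral_le_of_norm_le x.2.1 (Eventually.of_forall ?_)
          (Continuous.intervalIntegrable (by fun_prop) _ _)
        intro t ht
        have htI : t ∈ Icc (0 : ℝ) 1 := ⟨ht.1.le, ht.2.trans x.2.2⟩
        rw [IccExtend_of_mem _ _ htI]
        exact hf ⟨t, htI⟩
    _ = B * (x : ℝ) ^ (n + 1) / (n + 1).factorial := by
        rw [intervalIntegral.integral_div, intervalIntegral.integral_const_mul, integral_pow,
          Nat.factorial_succ]
        push_cast
        field_simp
        simp

/-- The Volterra operator `f ↦ ∫₀ˣ ∫₀ᵗ r f`, whose fixed-point equation is `y'' = r y`. -/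
noncomputable def volterra (r : C(unitInterval, ℂ)) : C(unitInterval, ℂ) →L[ℂ] C(unitInterval, ℂ) :=
  primitive ∘L primitive ∘L ContinuousLinearMap.mul ℂ C(unitInterval, ℂ) r

theorem norm_volterra_pow_apply_le (r f : C(unitInterval, ℂ)) (n : ℕ) (x : unitInterval) :
    ‖(volterra r ^ n) f x‖ ≤ ‖r‖ ^ n * ‖f‖ * (x : ℝ) ^ (2 * n) / (2 * n).factorial := by
  induction n generalizing x with
  | zero => simpa using f.norm_coe_le_norm x
  | succ n ih =>
    rw [pow_succ']
    refine norm_primitive_apply_le (norm_primitive_apply_le (B := ‖r‖ ^ (n + 1) * ‖f‖) ?_) x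
    intro x
    calc ‖r x * (volterra r ^ n) f x‖
        ≤ ‖r‖ * (‖r‖ ^ n * ‖f‖ * (x : ℝ) ^ (2 * n) / (2 * n).factorial) := by
          rw [norm_mul]
          exact mul_le_mul (r.norm_coe_le_norm x) (ih x) (norm_nonneg _) (norm_nonneg _)
      _ = ‖r‖ ^ (n + 1) * ‖f‖ * (x : ℝ) ^ (2 * n) / (2 * n).factorial := by ring

theorem norm_volterra_pow_le (r : C(unitInterval, ℂ)) (n : ℕ) :
    ‖volterra r ^ n‖ ≤ ‖r‖ ^ n / n.factorial := by
  refine ContinuousLinearMap.opNorm_le_bound _ (by positivity) fun f => ?_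
  refine (ContinuousMap.norm_le _ (by positivity)).2 fun x => ?_
  calc ‖(volterra r ^ n) f x‖
      ≤ ‖r‖ ^ n * ‖f‖ * (x : ℝ) ^ (2 * n) / (2 * n).factorial := norm_volterra_pow_apply_le r f n x
    _ ≤ ‖r‖ ^ n * ‖f‖ * 1 / n.factorial := by
        gcongr
        · exact pow_le_one₀ x.2.1 x.2.2
        · exact Nat.le_mul_of_pos_left n two_pos
    _ = ‖r‖ ^ n / n.factorial * ‖f‖ := by ring

theorem isUnit_one_sub_volterra (r : C(unitInterval, ℂ)) : IsUnit (1 - volterra r) := by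
  obtain ⟨n, hn⟩ := ((FloorSemiring.tendsto_pow_div_factorial_atTop ‖r‖).eventually
    (gt_mem_nhds zero_lt_one)).exists
  exact isUnit_one_sub_of_norm_pow_lt_one (R := C(unitInterval, ℂ) →L[ℂ] C(unitInterval, ℂ))
    ((norm_volterra_pow_le r n).trans_lt hn)

theorem differentiable_inverse_one_sub_volterra {r : ℂ → C(unitInterval, ℂ)}
    (hr : Differentiable ℂ r) :
    Differentiable ℂ fun s => Ring.inverse (1 - volterra (r s)) := by
  have hvolterra : Differentiable ℂ fun s => volterra (r s) := by
    unfold volterra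
    fun_prop
  exact Differentiable.inverse (𝕜 := ℂ) (R := C(unitInterval, ℂ) →L[ℂ] C(unitInterval, ℂ))
    (Differentiable.const_sub hvolterra (1 : C(unitInterval, ℂ) →L[ℂ] C(unitInterval, ℂ)))
    fun s => isUnit_one_sub_volterra (r s)

end Volterra

section SchrodingerEquation

/-- `Y` solves `Y'' = (p + s) Y` on `[0,1]`, with derivative `D`. Derivatives are two-sided at the
endpoints too. -/
structure IsSchrodingerSol (p : ℝ → ℝ) (s : ℂ) (Y D : ℝ → ℂ) : Prop where
  hasDerivAt : ∀ x ∈ Icc (0 : ℝ) 1, HasDerivAt Y (D x) x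
  hasDerivAt_deriv : ∀ x ∈ Icc (0 : ℝ) 1, HasDerivAt D ((p x + s) * Y x) x

theorem exists_entire_isSchrodingerSol {p : ℝ → ℝ} (hp : ContinuousOn p (Icc 0 1)) (α β : ℂ) :
    ∃ Y D : ℂ → ℝ → ℂ, (∀ s, IsSchrodingerSol p s (Y s) (D s)) ∧
      (∀ s, Y s 0 = α) ∧ (∀ s, D s 0 = β) ∧
      ∀ x ∈ Icc (0 : ℝ) 1, Differentiable ℂ fun s => Y s x := by
  let pI : C(unitInterval, ℂ) :=
    ⟨fun x => (p x : ℂ), Complex.continuous_ofReal.comp hp.domRestrict⟩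
  let r (s : ℂ) : C(unitInterval, ℂ) := pI + s • 1
  let y₀ : C(unitInterval, ℂ) := .const _ α + primitive (.const _ β)
  let y (s : ℂ) : C(unitInterval, ℂ) := Ring.inverse (1 - volterra (r s)) y₀
  let v (s : ℂ) : C(unitInterval, ℂ) := .const _ β + primitive (r s * y s)
  have hr : Differentiable ℂ r := by fun_prop
  have hfixed (s : ℂ) : y s = .const _ α + primitive (v s) := by
    have hinv := congrArg (fun T : C(unitInterval, ℂ) →L[ℂ] C(unitInterval, ℂ) => T y₀)
      (Ring.mul_inverse_cancel _ (isUnit_one_sub_volterra (r s)))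
    have hy : y s - primitive (primitive (r s * y s)) = y₀ := hinv
    rw [sub_eq_iff_eq_add.1 hy, map_add, add_assoc]
  let Y (s : ℂ) (x : ℝ) : ℂ := α + ∫ t in (0 : ℝ)..x, IccExtend zero_le_one (v s) t
  let D (s : ℂ) (x : ℝ) : ℂ := β + ∫ t in (0 : ℝ)..x, IccExtend zero_le_one (r s * y s) t
  have hY (s : ℂ) {x : ℝ} (hx : x ∈ Icc (0 : ℝ) 1) : Y s x = y s ⟨x, hx⟩ := by
    rw [hfixed]
    rfl
  refine ⟨Y, D, fun s => ⟨fun x hx => ?_, fun x hx => ?_⟩, by simp [Y], by simp [D],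
    fun x hx => ?_⟩
  · exact (hasDerivAt_integral_IccExtend (v s) hx).const_add α
  · rw [hY s hx]
    refine ((hasDerivAt_integral_IccExtend (r s * y s) hx).const_add β).congr_deriv ?_
    simp [r, pI]
  · simp only [hY _ hx]
    exact (ContinuousMap.evalCLM ℂ (⟨x, hx⟩ : unitInterval)).differentiable.comp
      ((differentiable_inverse_one_sub_volterra hr).clm_apply (differentiable_const y₀))

namespace IsSchrodingerSol

variable {p : ℝ → ℝ} {s : ℂ} {Y D Z E : ℝ → ℂ}

theorem continuousOn (h : IsSchrodingerSol p s Y D) : ContinuousOn Y (Icc 0 1) :=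
  fun x hx => (h.hasDerivAt x hx).continuousAt.continuousWithinAt

theorem reflect (h : IsSchrodingerSol p s Y D) :
    IsSchrodingerSol (fun x => p (1 - x)) s (fun x => Y (1 - x)) (fun x => -D (1 - x)) where
  hasDerivAt x hx :=
    ((h.hasDerivAt (1 - x) (Icc.one_sub_mem hx)).scomp x
      ((hasDerivAt_id x).const_sub 1)).congr_deriv (by simp)
  hasDerivAt_deriv x hx :=
    ((h.hasDerivAt_deriv (1 - x) (Icc.one_sub_mem hx)).scomp x
      ((hasDerivAt_id x).const_sub 1)).neg.congr_deriv (by simp)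

theorem linearCombination (h : IsSchrodingerSol p s Y D) (k : IsSchrodingerSol p s Z E)
    (a b : ℂ) :
    IsSchrodingerSol p s (fun x => a * Y x - b * Z x) (fun x => a * D x - b * E x) where
  hasDerivAt x hx := ((h.hasDerivAt x hx).const_mul a).sub ((k.hasDerivAt x hx).const_mul b)
  hasDerivAt_deriv x hx :=
    (((h.hasDerivAt_deriv x hx).const_mul a).sub
      ((k.hasDerivAt_deriv x hx).const_mul b)).congr_deriv (by ring)

theorem wronskian_eq (h : IsSchrodingerSol p s Y D) (k : IsSchrodingerSol p s Z E) {x : ℝ}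
    (hx : x ∈ Icc (0 : ℝ) 1) : Y x * E x - D x * Z x = Y 0 * E 0 - D 0 * Z 0 := by
  have hderiv (x : ℝ) (hx : x ∈ Icc (0 : ℝ) 1) :
      HasDerivAt (fun x => Y x * E x - D x * Z x) 0 x :=
    (((h.hasDerivAt x hx).mul (k.hasDerivAt_deriv x hx)).sub
      ((h.hasDerivAt_deriv x hx).mul (k.hasDerivAt x hx))).congr_deriv (by ring)
  exact constant_of_has_deriv_right_zero
    (fun x hx => (hderiv x hx).continuousAt.continuousWithinAt)
    (fun x hx => (hderiv x ⟨hx.1, hx.2.le⟩).hasDerivWithinAt) x hx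

end IsSchrodingerSol

/-- The solutions `C`, `S` of `Y'' = (p + s) Y` with initial data `(1, 0)` and `(0, 1)` at `0`
(cosine- and sine-type solutions), as entire functions of the spectral parameter `s`. -/
structure FundamentalSystem (p : ℝ → ℝ) where
  (C C' S S' : ℂ → ℝ → ℂ)
  isSol_C : ∀ s, IsSchrodingerSol p s (C s) (C' s)
  isSol_S : ∀ s, IsSchrodingerSol p s (S s) (S' s)
  C_zero : ∀ s, C s 0 = 1
  C'_zero : ∀ s, C' s 0 = 0
  S_zero : ∀ s, S s 0 = 0
  S'_zero : ∀ s, S' s 0 = 1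
  differentiable_C : ∀ x ∈ Icc (0 : ℝ) 1, Differentiable ℂ fun s => C s x
  differentiable_S : ∀ x ∈ Icc (0 : ℝ) 1, Differentiable ℂ fun s => S s x

theorem nonempty_fundamentalSystem {p : ℝ → ℝ} (hp : ContinuousOn p (Icc 0 1)) :
    Nonempty (FundamentalSystem p) := by
  obtain ⟨C, C', hC, hC0, hC'0, hCs⟩ := exists_entire_isSchrodingerSol hp 1 0
  obtain ⟨S, S', hS, hS0, hS'0, hSs⟩ := exists_entire_isSchrodingerSol hp 0 1
  exact ⟨⟨C, C', S, S', hC, hS, hC0, hC'0, hS0, hS'0, hCs, hSs⟩⟩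

namespace FundamentalSystem

variable {p : ℝ → ℝ} (Φ : FundamentalSystem p)

theorem wronskian_eq_one (s : ℂ) {x : ℝ} (hx : x ∈ Icc (0 : ℝ) 1) :
    Φ.C s x * Φ.S' s x - Φ.C' s x * Φ.S s x = 1 := by
  rw [(Φ.isSol_C s).wronskian_eq (Φ.isSol_S s) hx, Φ.C_zero, Φ.C'_zero, Φ.S'_zero]
  ring

/-- The solution of the reflected equation `Y'' = (p(1 - ·) + s) Y` with initial data `(0, 1)`
at `0`. -/
def dirichlet (s : ℂ) (x : ℝ) : ℂ := Φ.S s 1 * Φ.C s (1 - x) - Φ.C s 1 * Φ.S s (1 - x)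

/-- The derivative of `FundamentalSystem.dirichlet` in `x`. -/
def dirichletDeriv (s : ℂ) (x : ℝ) : ℂ :=
  -(Φ.S s 1 * Φ.C' s (1 - x) - Φ.C s 1 * Φ.S' s (1 - x))

theorem isSol_dirichlet (s : ℂ) :
    IsSchrodingerSol (fun x => p (1 - x)) s (Φ.dirichlet s) (Φ.dirichletDeriv s) :=
  ((Φ.isSol_C s).linearCombination (Φ.isSol_S s) _ _).reflect

theorem dirichlet_zero (s : ℂ) : Φ.dirichlet s 0 = 0 := by
  simp [dirichlet, mul_comm]

theorem dirichletDeriv_zero (s : ℂ) : Φ.dirichletDeriv s 0 = 1 := by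
  rw [← Φ.wronskian_eq_one s (right_mem_Icc.2 zero_le_one), dirichletDeriv, sub_zero]
  ring

theorem dirichlet_one (s : ℂ) : Φ.dirichlet s 1 = Φ.S s 1 := by
  simp [dirichlet, Φ.C_zero, Φ.S_zero]

theorem dirichletDeriv_one (s : ℂ) : Φ.dirichletDeriv s 1 = Φ.C s 1 := by
  simp [dirichletDeriv, Φ.C'_zero, Φ.S'_zero]

end FundamentalSystem

end SchrodingerEquation

section Asymptotics

theorem norm_sinh_le (z : ℂ) : ‖Complex.sinh z‖ ≤ Real.exp |z.re| := by
  have htriangle := norm_sub_le (Complex.exp z) (Complex.exp (-z))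
  rw [Complex.norm_exp, Complex.norm_exp, Complex.neg_re] at htriangle
  rw [Complex.sinh, norm_div, Complex.norm_ofNat]
  linarith [Real.exp_le_exp.2 (le_abs_self z.re), Real.exp_le_exp.2 (neg_le_abs z.re)]

theorem norm_cosh_le (z : ℂ) : ‖Complex.cosh z‖ ≤ Real.exp |z.re| := by
  have htriangle := norm_add_le (Complex.exp z) (Complex.exp (-z))
  rw [Complex.norm_exp, Complex.norm_exp, Complex.neg_re] at htriangle
  rw [Complex.cosh, norm_div, Complex.norm_ofNat]
  linarith [Real.exp_le_exp.2 (le_abs_self z.re), Real.exp_le_exp.2 (neg_le_abs z.re)]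

theorem exp_re_div_four_le_norm_sinh {z : ℂ} (hz : 1 ≤ z.re) :
    Real.exp z.re / 4 ≤ ‖Complex.sinh z‖ := by
  have htriangle := norm_sub_norm_le (Complex.exp z) (Complex.exp (-z))
  rw [Complex.norm_exp, Complex.norm_exp, Complex.neg_re] at htriangle
  have hsmall : Real.exp (-z.re) ≤ 1 := Real.exp_le_one_iff.2 (by linarith)
  rw [Complex.sinh, norm_div, Complex.norm_ofNat]
  linarith [Real.add_one_le_exp z.re]

theorem abs_re_mul_ofReal (κ : ℂ) {x : ℝ} (hx : 0 ≤ x) : |(κ * x).re| = |κ.re| * x := by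
  rw [Complex.re_mul_ofReal, abs_mul, abs_of_nonneg hx]

/-- For `p = 0`, the solution of `Y'' = κ² Y` with `Y(0) = α` and `Y'(0) = β`, multiplied by `κ`
so that `κ = 0` needs no separate treatment. -/
noncomputable def freeSol (κ α β : ℂ) (x : ℝ) : ℂ :=
  Complex.sinh (κ * x) * β + κ * (Complex.cosh (κ * x) * α)

theorem norm_freeSol_le (κ α β : ℂ) {x : ℝ} (hx : 0 ≤ x) :
    ‖freeSol κ α β x‖ ≤ (‖β‖ + ‖κ‖ * ‖α‖) * Real.exp (|κ.re| * x) := by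
  rw [← abs_re_mul_ofReal κ hx]
  calc ‖freeSol κ α β x‖
      ≤ ‖Complex.sinh (κ * x)‖ * ‖β‖ + ‖κ‖ * (‖Complex.cosh (κ * x)‖ * ‖α‖) := by
        rw [← norm_mul, ← norm_mul, ← norm_mul]
        exact norm_add_le _ _
    _ ≤ Real.exp |(κ * x).re| * ‖β‖ + ‖κ‖ * (Real.exp |(κ * x).re| * ‖α‖) := by
        gcongr
        · exact norm_sinh_le _
        · exact norm_cosh_le _
    _ = (‖β‖ + ‖κ‖ * ‖α‖) * Real.exp |(κ * x).re| := by ring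

namespace IsSchrodingerSol

variable {p : ℝ → ℝ} {κ : ℂ} {Y D : ℝ → ℂ} {x P M : ℝ}

theorem duhamel (hp : ContinuousOn p (Icc 0 1)) (h : IsSchrodingerSol p (κ ^ 2) Y D)
    (hx : x ∈ Icc (0 : ℝ) 1) :
    κ * Y x = freeSol κ (Y 0) (D 0) x +
      ∫ t in (0 : ℝ)..x, Complex.sinh (κ * (x - t : ℝ)) * (p t * Y t) := by
  have hsub : Icc 0 x ⊆ Icc (0 : ℝ) 1 := Icc_subset_Icc_right hx.2
  have harg (t : ℝ) : HasDerivAt (fun t : ℝ => κ * (x - t : ℝ)) (-κ) t := by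
    simpa using ((hasDerivAt_id t).const_sub x).ofReal_comp.const_mul κ
  have hsinh (t : ℝ) : HasDerivAt (fun t : ℝ => Complex.sinh (κ * (x - t : ℝ)))
      (Complex.cosh (κ * (x - t : ℝ)) * -κ) t := (Complex.hasDerivAt_sinh _).comp t (harg t)
  have hcosh (t : ℝ) : HasDerivAt (fun t : ℝ => Complex.cosh (κ * (x - t : ℝ)))
      (Complex.sinh (κ * (x - t : ℝ)) * -κ) t := (Complex.hasDerivAt_cosh _).comp t (harg t)
  have hderiv (t : ℝ) (ht : t ∈ uIcc 0 x) :
      HasDerivAt (fun t : ℝ => Complex.sinh (κ * (x - t : ℝ)) * D t +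
        κ * (Complex.cosh (κ * (x - t : ℝ)) * Y t))
        (Complex.sinh (κ * (x - t : ℝ)) * (p t * Y t)) t := by
    rw [uIcc_of_le hx.1] at ht
    refine (((hsinh t).mul (h.hasDerivAt_deriv t (hsub ht))).add
      (((hcosh t).mul (h.hasDerivAt t (hsub ht))).const_mul κ)).congr_deriv ?_
    ring
  have hcont : ContinuousOn (fun t : ℝ => Complex.sinh (κ * (x - t : ℝ)) * (p t * Y t))
      (uIcc 0 x) := by
    rw [uIcc_of_le hx.1]
    exact fun t ht => (hsinh t).continuousAt.continuousWithinAt.mul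
      ((Complex.continuous_ofReal.comp_continuousOn (hp.mono hsub)).mul
        (h.continuousOn.mono hsub) t ht)
  rw [intervalIntegral.integral_eq_sub_of_hasDerivAt hderiv hcont.intervalIntegrable]
  simp [freeSol]

theorem norm_sub_freeSol_le (hp : ContinuousOn p (Icc 0 1))
    (hP : ∀ x ∈ Icc (0 : ℝ) 1, |p x| ≤ P) (h : IsSchrodingerSol p (κ ^ 2) Y D)
    (hM : ∀ t ∈ Icc (0 : ℝ) 1, ‖Y t‖ ≤ M * Real.exp (|κ.re| * t)) (hx : x ∈ Icc (0 : ℝ) 1) :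
    ‖κ * Y x - freeSol κ (Y 0) (D 0) x‖ ≤ P * M * Real.exp (|κ.re| * x) := by
  have hP0 : 0 ≤ P := (abs_nonneg _).trans (hP x hx)
  have hintegrand (t : ℝ) (ht : t ∈ uIoc 0 x) :
      ‖Complex.sinh (κ * (x - t : ℝ)) * (p t * Y t)‖ ≤ P * M * Real.exp (|κ.re| * x) := by
    rw [uIoc_of_le hx.1] at ht
    have htI : t ∈ Icc (0 : ℝ) 1 := ⟨ht.1.le, ht.2.trans hx.2⟩
    have hsinh := norm_sinh_le (κ * (x - t : ℝ))
    rw [abs_re_mul_ofReal κ (sub_nonneg.2 ht.2)] at hsinh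
    rw [norm_mul, norm_mul, Complex.norm_real, Real.norm_eq_abs]
    calc ‖Complex.sinh (κ * (x - t : ℝ))‖ * (|p t| * ‖Y t‖)
        ≤ Real.exp (|κ.re| * (x - t)) * (P * (M * Real.exp (|κ.re| * t))) := by
          gcongr
          · exact hP t htI
          · exact hM t htI
      _ = P * M * (Real.exp (|κ.re| * (x - t)) * Real.exp (|κ.re| * t)) := by ring
      _ = P * M * Real.exp (|κ.re| * x) := by rw [← Real.exp_add]; ring_nf
  have hbound := intervalIntegral.norm_integral_le_of_norm_le_const hintegrand
  rw [sub_zero, abs_of_nonneg hx.1] at hbound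
  rw [h.duhamel hp hx, add_sub_cancel_left]
  have hM0 : 0 ≤ M := by
    simpa using (norm_nonneg _).trans (hM 0 (left_mem_Icc.2 zero_le_one))
  exact hbound.trans (mul_le_of_le_one_right (by positivity) hx.2)

theorem norm_mul_le (hp : ContinuousOn p (Icc 0 1))
    (hP : ∀ x ∈ Icc (0 : ℝ) 1, |p x| ≤ P) (h : IsSchrodingerSol p (κ ^ 2) Y D)
    (hκ : 2 * P + 1 ≤ ‖κ‖) (hx : x ∈ Icc (0 : ℝ) 1) :
    ‖κ‖ * ‖Y x‖ ≤ 2 * (‖D 0‖ + ‖κ‖ * ‖Y 0‖) * Real.exp (|κ.re| * x) := by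
  obtain ⟨x₀, hx₀, hmax⟩ := isCompact_Icc.exists_isMaxOn (nonempty_Icc.2 (zero_le_one' ℝ))
    (f := fun x => ‖Y x‖ * Real.exp (-(|κ.re| * x)))
    (h.continuousOn.norm.mul (by fun_prop))
  set M := ‖Y x₀‖ * Real.exp (-(|κ.re| * x₀))
  set A := ‖D 0‖ + ‖κ‖ * ‖Y 0‖
  have hM (t : ℝ) (ht : t ∈ Icc (0 : ℝ) 1) : ‖Y t‖ ≤ M * Real.exp (|κ.re| * t) := by
    rw [← div_le_iff₀ (Real.exp_pos _), div_eq_mul_inv, ← Real.exp_neg]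
    exact hmax ht
  have hself : ‖κ‖ * M ≤ A + P * M := by
    have hbound : ‖κ * Y x₀‖ ≤ (A + P * M) * Real.exp (|κ.re| * x₀) := by
      rw [add_mul]
      exact (norm_le_norm_add_norm_sub' _ _).trans (add_le_add (norm_freeSol_le κ _ _ hx₀.1)
        (h.norm_sub_freeSol_le hp hP hM hx₀))
    rwa [← div_le_iff₀ (Real.exp_pos _), norm_mul, div_eq_mul_inv, ← Real.exp_neg,
      mul_assoc] at hbound
  have hM0 : 0 ≤ M := by positivity
  have hκM : ‖κ‖ * M ≤ 2 * A := by nlinarith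
  calc ‖κ‖ * ‖Y x‖ ≤ ‖κ‖ * (M * Real.exp (|κ.re| * x)) := by gcongr; exact hM x hx
    _ = ‖κ‖ * M * Real.exp (|κ.re| * x) := by ring
    _ ≤ 2 * A * Real.exp (|κ.re| * x) := by gcongr

theorem exp_div_eight_le_norm_mul (hp : ContinuousOn p (Icc 0 1))
    (hP : ∀ x ∈ Icc (0 : ℝ) 1, |p x| ≤ P) (h : IsSchrodingerSol p (κ ^ 2) Y D)
    (hY0 : Y 0 = 0) (hD0 : D 0 = 1) (hκ : 16 * P + 1 ≤ ‖κ‖) (hx : x ∈ Icc (0 : ℝ) 1)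
    (hκx : 1 ≤ κ.re * x) :
    Real.exp (κ.re * x) / 8 ≤ ‖κ‖ * ‖Y x‖ := by
  have hP0 : 0 ≤ P := (abs_nonneg _).trans (hP x hx)
  have hκ0 : 0 < ‖κ‖ := by linarith
  have hre : |κ.re| = κ.re := abs_of_pos (pos_of_mul_pos_left (one_pos.trans_le hκx) hx.1)
  have hupper (t : ℝ) (ht : t ∈ Icc (0 : ℝ) 1) : ‖Y t‖ ≤ 2 / ‖κ‖ * Real.exp (|κ.re| * t) := by
    have hbound := h.norm_mul_le hp hP (by linarith) ht
    rw [hY0, hD0, norm_zero, norm_one, mul_zero, add_zero, mul_one, mul_comm ‖κ‖,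
      ← le_div_iff₀ hκ0] at hbound
    exact hbound.trans_eq (by ring)
  have hremainder := h.norm_sub_freeSol_le hp hP hupper hx
  have hfree : freeSol κ (Y 0) (D 0) x = Complex.sinh (κ * x) := by simp [freeSol, hY0, hD0]
  rw [hfree, hre] at hremainder
  have hsmall : P * (2 / ‖κ‖) ≤ 1 / 8 := by
    rw [mul_div_assoc', div_le_div_iff₀ hκ0 (by norm_num)]
    linarith
  have hsinh := exp_re_div_four_le_norm_sinh (z := κ * x) (by rwa [Complex.re_mul_ofReal])
  rw [Complex.re_mul_ofReal] at hsinh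
  have htriangle := norm_le_norm_add_norm_sub (κ * Y x) (Complex.sinh (κ * x))
  rw [norm_mul] at htriangle
  linarith [mul_le_mul_of_nonneg_right hsmall (Real.exp_pos (κ.re * x)).le]

end IsSchrodingerSol

end Asymptotics

section PhragmenLindelof

theorem exists_norm_le_of_tendsto_cocompact_zero {X E : Type*} [TopologicalSpace X]
    [NormedAddCommGroup E] {f : X → E} (hf : Continuous f)
    (hlim : Tendsto f (cocompact X) (𝓝 0)) : ∃ B, ∀ x, ‖f x‖ ≤ B := by
  obtain ⟨B, hB⟩ := (ZeroAtInftyContinuousMap.isBounded_range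
    (⟨⟨f, hf⟩, hlim⟩ : ZeroAtInftyContinuousMap X E)).exists_norm_le
  exact ⟨B, fun x => hB _ (mem_range_self x)⟩

theorem isBigO_comp_I_mul_sq {E : Type*} [Norm E] {F : ℂ → E} {b c : ℝ}
    (hgrowth : F =O[Bornology.cobounded ℂ] fun z => Real.exp (b * ‖z‖ ^ c)) :
    (fun z => F (Complex.I * z ^ 2)) =O[Bornology.cobounded ℂ]
      fun z => Real.exp (b * ‖z‖ ^ (2 * c)) := by
  have hnorm (z : ℂ) : ‖Complex.I * z ^ 2‖ = ‖z‖ ^ 2 := by simp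
  have htendsto : Tendsto (fun z : ℂ => Complex.I * z ^ 2) (Bornology.cobounded ℂ)
      (Bornology.cobounded ℂ) := by
    rw [← tendsto_norm_atTop_iff_cobounded]
    simp only [hnorm]
    exact (tendsto_pow_atTop two_ne_zero).comp tendsto_norm_cobounded_atTop
  refine (hgrowth.comp_tendsto htendsto).congr_right fun z => ?_
  rw [Function.comp_apply, hnorm, Real.rpow_mul (norm_nonneg z), Real.rpow_two]

variable {E : Type*} [NormedAddCommGroup E] [NormedSpace ℂ E]

theorem exists_norm_le_of_isBigO_exp_rpow_of_norm_le_on_axes {f : ℂ → E}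
    (hf : Differentiable ℂ f) {b c B : ℝ} (hc : c < 2)
    (hgrowth : f =O[Bornology.cobounded ℂ] fun z => Real.exp (b * ‖z‖ ^ c))
    (hreal : ∀ r : ℝ, ‖f r‖ ≤ B) (himag : ∀ r : ℝ, ‖f (r * Complex.I)‖ ≤ B) (z : ℂ) :
    ‖f z‖ ≤ B := by
  have hgrowth' (l : Filter ℂ) : ∃ c < (2 : ℝ), ∃ b : ℝ,
      f =O[Bornology.cobounded ℂ ⊓ l] fun z => Real.exp (b * ‖z‖ ^ c) :=
    ⟨c, hc, b, hgrowth.mono inf_le_left⟩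
  rcases le_total 0 z.re with hre | hre <;> rcases le_total 0 z.im with him | him
  · exact PhragmenLindelof.quadrant_I hf.diffContOnCl (hgrowth' _) (fun r _ => hreal r)
      (fun r _ => himag r) hre him
  · exact PhragmenLindelof.quadrant_IV hf.diffContOnCl (hgrowth' _) (fun r _ => hreal r)
      (fun r _ => himag r) hre him
  · exact PhragmenLindelof.quadrant_II hf.diffContOnCl (hgrowth' _) (fun r _ => hreal r)
      (fun r _ => himag r) hre him
  · exact PhragmenLindelof.quadrant_III hf.diffContOnCl (hgrowth' _) (fun r _ => hreal r)
      (fun r _ => himag r) hre him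

/-- Opening the two half-planes to quadrants by `z ↦ i z²` keeps the growth below order `2`, so that
`F` is bounded by the Phragmén–Lindelöf principle and constant by Liouville's theorem. -/
theorem eq_zero_of_isBigO_exp_rpow_of_tendsto_zero_on_imaginary {F : ℂ → E}
    (hF : Differentiable ℂ F) {b c : ℝ} (hc : c < 1)
    (hgrowth : F =O[Bornology.cobounded ℂ] fun z => Real.exp (b * ‖z‖ ^ c))
    (himag : Tendsto (fun r : ℝ => F (r * Complex.I)) (cocompact ℝ) (𝓝 0)) (s : ℂ) :
    F s = 0 := by
  let f (z : ℂ) : E := F (Complex.I * z ^ 2)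
  have hf : Differentiable ℂ f := hF.comp (by fun_prop)
  obtain ⟨B, hB⟩ := exists_norm_le_of_tendsto_cocompact_zero
    (hF.continuous.comp (by fun_prop : Continuous fun r : ℝ => (r * Complex.I : ℂ))) himag
  have hreal (r : ℝ) : ‖f r‖ ≤ B := by
    convert hB (r ^ 2) using 3
    simp [f, mul_comm]
  have himag' (r : ℝ) : ‖f (r * Complex.I)‖ ≤ B := by
    convert hB (-r ^ 2) using 3
    simp [f, mul_pow, mul_comm]
  have hbounded : Bornology.IsBounded (range f) := isBounded_iff_forall_norm_le.2 ⟨B, by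
    rintro _ ⟨z, rfl⟩
    exact exists_norm_le_of_isBigO_exp_rpow_of_norm_le_on_axes hf (by linarith : 2 * c < 2)
      (isBigO_comp_I_mul_sq hgrowth) hreal himag' z⟩
  have hconst (s : ℂ) : F s = F 0 := by
    obtain ⟨z, hz⟩ := IsAlgClosed.exists_pow_nat_eq (-Complex.I * s) two_pos
    have hfz := hf.apply_eq_apply_of_bounded hbounded z 0
    simpa [f, hz, ← mul_assoc] using hfz
  have hlim : Tendsto (fun _ : ℝ => F 0) (cocompact ℝ) (𝓝 0) :=
    himag.congr fun r => hconst _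
  rw [hconst s, tendsto_nhds_unique tendsto_const_nhds hlim]

end PhragmenLindelof

section InverseUniqueness

namespace FundamentalSystem

variable {p : ℝ → ℝ} (Φ : FundamentalSystem p) {κ : ℂ} {x P : ℝ}

theorem norm_mul_S_le (hp : ContinuousOn p (Icc 0 1)) (hP : ∀ x ∈ Icc (0 : ℝ) 1, |p x| ≤ P)
    (hκ : 2 * P + 1 ≤ ‖κ‖) (hx : x ∈ Icc (0 : ℝ) 1) :
    ‖κ‖ * ‖Φ.S (κ ^ 2) x‖ ≤ 2 * Real.exp (|κ.re| * x) := by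
  simpa [Φ.S_zero, Φ.S'_zero] using (Φ.isSol_S (κ ^ 2)).norm_mul_le hp hP hκ hx

theorem norm_C_le (hp : ContinuousOn p (Icc 0 1)) (hP : ∀ x ∈ Icc (0 : ℝ) 1, |p x| ≤ P)
    (hκ : 2 * P + 1 ≤ ‖κ‖) (hκ0 : 0 < ‖κ‖) (hx : x ∈ Icc (0 : ℝ) 1) :
    ‖Φ.C (κ ^ 2) x‖ ≤ 2 * Real.exp (|κ.re| * x) := by
  have hbound := (Φ.isSol_C (κ ^ 2)).norm_mul_le hp hP hκ hx
  rw [Φ.C_zero, Φ.C'_zero, norm_zero, norm_one, zero_add, mul_one, mul_right_comm, mul_comm 2,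
    mul_assoc] at hbound
  exact le_of_mul_le_mul_left (by linarith) hκ0

theorem norm_mul_dirichlet_le (hp : ContinuousOn p (Icc 0 1))
    (hP : ∀ x ∈ Icc (0 : ℝ) 1, |p x| ≤ P) (hκ : 2 * P + 1 ≤ ‖κ‖) (hx : x ∈ Icc (0 : ℝ) 1) :
    ‖κ‖ * ‖Φ.dirichlet (κ ^ 2) x‖ ≤ 2 * Real.exp (|κ.re| * x) := by
  have hreflect : MapsTo (fun x : ℝ => 1 - x) (Icc 0 1) (Icc 0 1) := fun _ => Icc.one_sub_mem
  simpa [Φ.dirichlet_zero, Φ.dirichletDeriv_zero] using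
    (Φ.isSol_dirichlet (κ ^ 2)).norm_mul_le (hp.comp (by fun_prop) hreflect)
      (fun x hx => hP _ (hreflect hx)) hκ hx

theorem exp_div_eight_le_norm_mul_S (hp : ContinuousOn p (Icc 0 1))
    (hP : ∀ x ∈ Icc (0 : ℝ) 1, |p x| ≤ P) (hκ : 16 * P + 1 ≤ ‖κ‖) (hx : x ∈ Icc (0 : ℝ) 1)
    (hκx : 1 ≤ κ.re * x) : Real.exp (κ.re * x) / 8 ≤ ‖κ‖ * ‖Φ.S (κ ^ 2) x‖ :=
  (Φ.isSol_S _).exp_div_eight_le_norm_mul hp hP (Φ.S_zero _) (Φ.S'_zero _) hκ hx hκx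

theorem S_sq_ne_zero (hp : ContinuousOn p (Icc 0 1))
    (hP : ∀ x ∈ Icc (0 : ℝ) 1, |p x| ≤ P) (hκ : 16 * P + 1 ≤ ‖κ‖) (hx : x ∈ Icc (0 : ℝ) 1)
    (hκx : 1 ≤ κ.re * x) : Φ.S (κ ^ 2) x ≠ 0 := by
  intro hzero
  have hlower := Φ.exp_div_eight_le_norm_mul_S hp hP hκ hx hκx
  rw [hzero, norm_zero, mul_zero] at hlower
  linarith [Real.exp_pos (κ.re * x)]

theorem hasDerivAt_C_div_S {s : ℂ} (hx : x ∈ Icc (0 : ℝ) 1) (hS : Φ.S s x ≠ 0) :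
    HasDerivAt (fun x => Φ.C s x / Φ.S s x) (-1 / Φ.S s x ^ 2) x := by
  refine (((Φ.isSol_C s).hasDerivAt x hx).div ((Φ.isSol_S s).hasDerivAt x hx) hS).congr_deriv ?_
  rw [← Φ.wronskian_eq_one s hx]
  ring

theorem hasDerivAt_S_sq (s : ℂ) (hx : x ∈ Icc (0 : ℝ) 1) :
    HasDerivAt (fun x => Φ.S s x ^ 2) (2 * (Φ.S s x * Φ.S' s x)) x :=
  (((Φ.isSol_S s).hasDerivAt x hx).fun_pow 2).congr_deriv (by norm_num; ring)

theorem hasDerivAt_S'_div_S {s : ℂ} (hx : x ∈ Icc (0 : ℝ) 1) (hS : Φ.S s x ≠ 0) :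
    HasDerivAt (fun x => Φ.S' s x / Φ.S s x) (p x + s - (Φ.S' s x / Φ.S s x) ^ 2) x := by
  refine (((Φ.isSol_S s).hasDerivAt_deriv x hx).div
    ((Φ.isSol_S s).hasDerivAt x hx) hS).congr_deriv ?_
  field_simp

end FundamentalSystem

theorem derivs_eqOn_of_eqOn {E : Type*} [NormedAddCommGroup E] [NormedSpace ℝ E]
    {f g f' g' : ℝ → E} {U : Set ℝ} (hU : IsOpen U) (hf : ∀ x ∈ U, HasDerivAt f (f' x) x)
    (hg : ∀ x ∈ U, HasDerivAt g (g' x) x) (hfg : EqOn f g U) : EqOn f' g' U := fun x hx =>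
  (hf x hx).unique ((hg x hx).congr_of_eventuallyEq (hfg.eventuallyEq_of_mem (hU.mem_nhds hx)))

theorem exists_sq_eq_and_re_nonneg (s : ℂ) :
    ∃ κ : ℂ, κ ^ 2 = s ∧ 0 ≤ κ.re ∧ ‖κ‖ = ‖s‖ ^ (1 / 2 : ℝ) := by
  obtain ⟨κ, rfl⟩ := IsAlgClosed.exists_pow_nat_eq s two_pos
  rw [norm_pow, ← Real.sqrt_eq_rpow, Real.sqrt_sq (norm_nonneg κ)]
  rcases le_total 0 κ.re with hre | hre
  · exact ⟨κ, rfl, hre, rfl⟩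
  · exact ⟨-κ, neg_sq κ, neg_nonneg.2 hre, norm_neg κ⟩

theorem norm_div_two_le_re {κ : ℂ} (hsq : (κ ^ 2).re = 0) (hre : 0 ≤ κ.re) :
    ‖κ‖ / 2 ≤ κ.re := by
  rw [div_le_iff₀ two_pos]
  refine abs_le_of_sq_le_sq' ?_ (by positivity) |>.2
  rw [Complex.sq_norm, Complex.normSq_apply]
  rw [pow_two, Complex.mul_re] at hsq
  nlinarith

variable {p₁ p₂ : ℝ → ℝ} (Φ₁ : FundamentalSystem p₁) (Φ₂ : FundamentalSystem p₂)

/-- `S₁ C₂ - S₂ C₁`. At the right endpoint it measures the difference between the Weyl functions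
`C₁(1) / S₁(1)` and `C₂(1) / S₂(1)` of the two equations. -/
def mixedDeterminant (s : ℂ) (x : ℝ) : ℂ := Φ₁.S s x * Φ₂.C s x - Φ₂.S s x * Φ₁.C s x

theorem differentiable_mixedDeterminant {x : ℝ} (hx : x ∈ Icc (0 : ℝ) 1) :
    Differentiable ℂ fun s => mixedDeterminant Φ₁ Φ₂ s x :=
  ((Φ₁.differentiable_S x hx).mul (Φ₂.differentiable_C x hx)).sub
    ((Φ₂.differentiable_S x hx).mul (Φ₁.differentiable_C x hx))

theorem mixedDeterminant_eq_of_mixedDeterminant_one_eq_zero {s : ℂ} {x : ℝ} (hS₁ : Φ₁.S s 1 ≠ 0)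
    (hS₂ : Φ₂.S s 1 ≠ 0) (hone : mixedDeterminant Φ₁ Φ₂ s 1 = 0) :
    mixedDeterminant Φ₁ Φ₂ s x = Φ₁.S s x * Φ₂.dirichlet s (1 - x) / Φ₂.S s 1 -
      Φ₂.S s x * Φ₁.dirichlet s (1 - x) / Φ₁.S s 1 := by
  rw [div_sub_div _ _ hS₂ hS₁, eq_div_iff (mul_ne_zero hS₂ hS₁)]
  simp only [mixedDeterminant, FundamentalSystem.dirichlet, sub_sub_cancel] at hone ⊢
  linear_combination (Φ₁.S s x * Φ₂.S s x) * hone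

variable {κ : ℂ} {x P : ℝ}

theorem norm_S_mul_C_le (hp₁ : ContinuousOn p₁ (Icc 0 1)) (hp₂ : ContinuousOn p₂ (Icc 0 1))
    (hP₁ : ∀ x ∈ Icc (0 : ℝ) 1, |p₁ x| ≤ P) (hP₂ : ∀ x ∈ Icc (0 : ℝ) 1, |p₂ x| ≤ P)
    (hκ : 2 * P + 1 ≤ ‖κ‖) (hx : x ∈ Icc (0 : ℝ) 1) :
    ‖Φ₁.S (κ ^ 2) x * Φ₂.C (κ ^ 2) x‖ ≤ 4 * Real.exp (2 * ‖κ‖) := by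
  have hκ1 : 1 ≤ ‖κ‖ := by linarith [(abs_nonneg _).trans (hP₁ x hx)]
  have hexp : Real.exp (|κ.re| * x) ≤ Real.exp ‖κ‖ :=
    Real.exp_le_exp.2 ((mul_le_of_le_one_right (abs_nonneg _) hx.2).trans κ.abs_re_le_norm)
  have hS : ‖Φ₁.S (κ ^ 2) x‖ ≤ 2 * Real.exp ‖κ‖ :=
    calc ‖Φ₁.S (κ ^ 2) x‖ ≤ ‖κ‖ * ‖Φ₁.S (κ ^ 2) x‖ := le_mul_of_one_le_left (norm_nonneg _) hκ1
      _ ≤ 2 * Real.exp (|κ.re| * x) := Φ₁.norm_mul_S_le hp₁ hP₁ hκ hx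
      _ ≤ 2 * Real.exp ‖κ‖ := by gcongr
  have hC : ‖Φ₂.C (κ ^ 2) x‖ ≤ 2 * Real.exp ‖κ‖ :=
    (Φ₂.norm_C_le hp₂ hP₂ hκ (one_pos.trans_le hκ1) hx).trans (by gcongr)
  calc ‖Φ₁.S (κ ^ 2) x * Φ₂.C (κ ^ 2) x‖ ≤ 2 * Real.exp ‖κ‖ * (2 * Real.exp ‖κ‖) := by
        rw [norm_mul]
        gcongr
    _ = 4 * Real.exp (2 * ‖κ‖) := by rw [two_mul ‖κ‖, Real.exp_add]; ring

theorem norm_mul_S_mul_dirichlet_div_S_le (hp₁ : ContinuousOn p₁ (Icc 0 1))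
    (hp₂ : ContinuousOn p₂ (Icc 0 1)) (hP₁ : ∀ x ∈ Icc (0 : ℝ) 1, |p₁ x| ≤ P)
    (hP₂ : ∀ x ∈ Icc (0 : ℝ) 1, |p₂ x| ≤ P) (hκ : 16 * P + 2 ≤ ‖κ‖) (hre : ‖κ‖ / 2 ≤ κ.re)
    (hx : x ∈ Icc (0 : ℝ) 1) :
    ‖κ‖ * ‖Φ₁.S (κ ^ 2) x * Φ₂.dirichlet (κ ^ 2) (1 - x) / Φ₂.S (κ ^ 2) 1‖ ≤ 32 := by
  have hP0 : 0 ≤ P := (abs_nonneg _).trans (hP₁ x hx)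
  have habs : |κ.re| = κ.re := abs_of_nonneg (by linarith)
  have hS₁ := Φ₁.norm_mul_S_le (κ := κ) hp₁ hP₁ (by linarith) hx
  have hdir := Φ₂.norm_mul_dirichlet_le (κ := κ) hp₂ hP₂ (by linarith) (Icc.one_sub_mem hx)
  have hS₂ := Φ₂.exp_div_eight_le_norm_mul_S (κ := κ) hp₂ hP₂ (by linarith)
    (right_mem_Icc.2 zero_le_one) (by linarith)
  rw [habs] at hS₁ hdir
  rw [mul_one] at hS₂
  have hS₂pos : 0 < ‖Φ₂.S (κ ^ 2) 1‖ :=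
    pos_of_mul_pos_right ((by positivity : 0 < Real.exp κ.re / 8).trans_le hS₂) (norm_nonneg κ)
  rw [norm_div, norm_mul, mul_div_assoc', div_le_iff₀ hS₂pos]
  refine le_of_mul_le_mul_left ?_ (by linarith : 0 < ‖κ‖)
  calc ‖κ‖ * (‖κ‖ * (‖Φ₁.S (κ ^ 2) x‖ * ‖Φ₂.dirichlet (κ ^ 2) (1 - x)‖))
      = ‖κ‖ * ‖Φ₁.S (κ ^ 2) x‖ * (‖κ‖ * ‖Φ₂.dirichlet (κ ^ 2) (1 - x)‖) := by ring
    _ ≤ 2 * Real.exp (κ.re * x) * (2 * Real.exp (κ.re * (1 - x))) := by gcongr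
    _ = 32 * (Real.exp κ.re / 8) := by
        rw [mul_mul_mul_comm, ← Real.exp_add]; ring_nf
    _ ≤ ‖κ‖ * (32 * ‖Φ₂.S (κ ^ 2) 1‖) := by linarith

theorem norm_mul_mixedDeterminant_le (hp₁ : ContinuousOn p₁ (Icc 0 1))
    (hp₂ : ContinuousOn p₂ (Icc 0 1)) (hP₁ : ∀ x ∈ Icc (0 : ℝ) 1, |p₁ x| ≤ P)
    (hP₂ : ∀ x ∈ Icc (0 : ℝ) 1, |p₂ x| ≤ P) (hone : mixedDeterminant Φ₁ Φ₂ (κ ^ 2) 1 = 0)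
    (hκ : 16 * P + 2 ≤ ‖κ‖) (hre : ‖κ‖ / 2 ≤ κ.re) (hx : x ∈ Icc (0 : ℝ) 1) :
    ‖κ‖ * ‖mixedDeterminant Φ₁ Φ₂ (κ ^ 2) x‖ ≤ 64 := by
  have hP0 : 0 ≤ P := (abs_nonneg _).trans (hP₁ x hx)
  have hone_mem : (1 : ℝ) ∈ Icc (0 : ℝ) 1 := right_mem_Icc.2 zero_le_one
  rw [mixedDeterminant_eq_of_mixedDeterminant_one_eq_zero Φ₁ Φ₂
    (Φ₁.S_sq_ne_zero hp₁ hP₁ (by linarith) hone_mem (by linarith))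
    (Φ₂.S_sq_ne_zero hp₂ hP₂ (by linarith) hone_mem (by linarith)) hone]
  refine (mul_le_mul_of_nonneg_left (norm_sub_le _ _) (norm_nonneg κ)).trans ?_
  linarith [norm_mul_S_mul_dirichlet_div_S_le Φ₁ Φ₂ hp₁ hp₂ hP₁ hP₂ hκ hre hx,
    norm_mul_S_mul_dirichlet_div_S_le Φ₂ Φ₁ hp₂ hp₁ hP₂ hP₁ hκ hre hx]

theorem mixedDeterminant_isBigO (hp₁ : ContinuousOn p₁ (Icc 0 1)) (hp₂ : ContinuousOn p₂ (Icc 0 1))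
    (hP₁ : ∀ x ∈ Icc (0 : ℝ) 1, |p₁ x| ≤ P) (hP₂ : ∀ x ∈ Icc (0 : ℝ) 1, |p₂ x| ≤ P)
    (hx : x ∈ Icc (0 : ℝ) 1) :
    (fun s => mixedDeterminant Φ₁ Φ₂ s x) =O[Bornology.cobounded ℂ]
      fun s => Real.exp (2 * ‖s‖ ^ (1 / 2 : ℝ)) := by
  have hlarge := ((tendsto_rpow_atTop (one_half_pos (α := ℝ))).comp
    (tendsto_norm_cobounded_atTop (E := ℂ))).eventually_ge_atTop (2 * P + 1)
  refine Asymptotics.IsBigO.of_bound 8 (hlarge.mono fun s hs => ?_)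
  obtain ⟨κ, rfl, -, hκ⟩ := exists_sq_eq_and_re_nonneg s
  rw [Function.comp_apply, ← hκ] at hs
  rw [← hκ, Real.norm_of_nonneg (Real.exp_pos _).le]
  refine (norm_sub_le _ _).trans ?_
  linarith [norm_S_mul_C_le Φ₁ Φ₂ hp₁ hp₂ hP₁ hP₂ hs hx,
    norm_S_mul_C_le Φ₂ Φ₁ hp₂ hp₁ hP₂ hP₁ hs hx]

theorem tendsto_mixedDeterminant_imaginary (hp₁ : ContinuousOn p₁ (Icc 0 1))
    (hp₂ : ContinuousOn p₂ (Icc 0 1)) (hP₁ : ∀ x ∈ Icc (0 : ℝ) 1, |p₁ x| ≤ P)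
    (hP₂ : ∀ x ∈ Icc (0 : ℝ) 1, |p₂ x| ≤ P) (hone : ∀ s, mixedDeterminant Φ₁ Φ₂ s 1 = 0)
    (hx : x ∈ Icc (0 : ℝ) 1) :
    Tendsto (fun r : ℝ => mixedDeterminant Φ₁ Φ₂ (r * Complex.I) x) (cocompact ℝ) (𝓝 0) := by
  have hP0 : 0 ≤ P := (abs_nonneg _).trans (hP₁ x hx)
  have hsqrt : Tendsto (fun r : ℝ => ‖(r * Complex.I : ℂ)‖ ^ (1 / 2 : ℝ)) (cocompact ℝ) atTop := by
    simpa only [norm_mul, Complex.norm_I, mul_one, Complex.norm_real, Function.comp_def] using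
      (tendsto_rpow_atTop (one_half_pos (α := ℝ))).comp (tendsto_norm_cocompact_atTop (E := ℝ))
  refine squeeze_zero_norm' ?_ (hsqrt.const_div_atTop 64)
  filter_upwards [hsqrt.eventually_ge_atTop (16 * P + 2)] with r hr
  obtain ⟨κ, hsq, hre, hκ⟩ := exists_sq_eq_and_re_nonneg (r * Complex.I)
  rw [← hκ] at hr ⊢
  rw [le_div_iff₀' (by linarith), ← hsq]
  exact norm_mul_mixedDeterminant_le Φ₁ Φ₂ hp₁ hp₂ hP₁ hP₂ (hone _) hr
    (norm_div_two_le_re (by simp [hsq]) hre) hx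

theorem potential_eqOn_of_mixedDeterminant_eq_zero {s : ℂ} {U : Set ℝ} (hU : IsOpen U)
    (hUI : U ⊆ Icc 0 1) (hS₁ : ∀ x ∈ U, Φ₁.S s x ≠ 0) (hS₂ : ∀ x ∈ U, Φ₂.S s x ≠ 0)
    (hzero : ∀ x ∈ U, mixedDeterminant Φ₁ Φ₂ s x = 0) : EqOn p₁ p₂ U := by
  have hquotient : EqOn (fun x => Φ₁.C s x / Φ₁.S s x) (fun x => Φ₂.C s x / Φ₂.S s x) U := by
    intro x hx
    rw [div_eq_div_iff (hS₁ x hx) (hS₂ x hx)]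
    have hzerox : Φ₁.S s x * Φ₂.C s x - Φ₂.S s x * Φ₁.C s x = 0 := hzero x hx
    linear_combination -hzerox
  have hsq : EqOn (fun x => Φ₁.S s x ^ 2) (fun x => Φ₂.S s x ^ 2) U := by
    intro x hx
    have hderiv := derivs_eqOn_of_eqOn hU
      (fun x hx => Φ₁.hasDerivAt_C_div_S (hUI hx) (hS₁ x hx))
      (fun x hx => Φ₂.hasDerivAt_C_div_S (hUI hx) (hS₂ x hx)) hquotient hx
    simpa [neg_div] using hderiv
  have hlog : EqOn (fun x => Φ₁.S' s x / Φ₁.S s x) (fun x => Φ₂.S' s x / Φ₂.S s x) U := by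
    intro x hx
    have hderiv := derivs_eqOn_of_eqOn hU (fun x hx => Φ₁.hasDerivAt_S_sq s (hUI hx))
      (fun x hx => Φ₂.hasDerivAt_S_sq s (hUI hx)) hsq hx
    have hsqx : Φ₁.S s x ^ 2 = Φ₂.S s x ^ 2 := hsq hx
    have hmul : Φ₁.S s x * Φ₁.S' s x = Φ₂.S s x * Φ₂.S' s x :=
      mul_left_cancel₀ two_ne_zero hderiv
    calc Φ₁.S' s x / Φ₁.S s x = Φ₁.S s x * Φ₁.S' s x / Φ₁.S s x ^ 2 := by
          have hS₁x := hS₁ x hx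
          field_simp
      _ = Φ₂.S s x * Φ₂.S' s x / Φ₂.S s x ^ 2 := by rw [hmul, hsqx]
      _ = Φ₂.S' s x / Φ₂.S s x := by
          have hS₂x := hS₂ x hx
          field_simp
  intro x hx
  have hriccati := derivs_eqOn_of_eqOn hU
    (fun x hx => Φ₁.hasDerivAt_S'_div_S (hUI hx) (hS₁ x hx))
    (fun x hx => Φ₂.hasDerivAt_S'_div_S (hUI hx) (hS₂ x hx)) hlog hx
  have hlogx : Φ₁.S' s x / Φ₁.S s x = Φ₂.S' s x / Φ₂.S s x := hlog hx
  simp only [hlogx] at hriccati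
  exact_mod_cast add_right_cancel (sub_left_inj.1 hriccati)

theorem potential_eqOn_of_mixedDeterminant_one_eq_zero (hp₁ : ContinuousOn p₁ (Icc 0 1))
    (hp₂ : ContinuousOn p₂ (Icc 0 1)) (hone : ∀ s, mixedDeterminant Φ₁ Φ₂ s 1 = 0) :
    EqOn p₁ p₂ (Icc 0 1) := by
  obtain ⟨P, hP⟩ := isCompact_Icc.exists_bound_of_continuousOn (hp₁.prodMk hp₂)
  have hP₁ (x : ℝ) (hx : x ∈ Icc (0 : ℝ) 1) : |p₁ x| ≤ P := (norm_fst_le _).trans (hP x hx)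
  have hP₂ (x : ℝ) (hx : x ∈ Icc (0 : ℝ) 1) : |p₂ x| ≤ P := (norm_snd_le _).trans (hP x hx)
  have hzero (x : ℝ) (hx : x ∈ Icc (0 : ℝ) 1) (s : ℂ) : mixedDeterminant Φ₁ Φ₂ s x = 0 :=
    eq_zero_of_isBigO_exp_rpow_of_tendsto_zero_on_imaginary
      (differentiable_mixedDeterminant Φ₁ Φ₂ hx) one_half_lt_one
      (mixedDeterminant_isBigO Φ₁ Φ₂ hp₁ hp₂ hP₁ hP₂ hx)
      (tendsto_mixedDeterminant_imaginary Φ₁ Φ₂ hp₁ hp₂ hP₁ hP₂ hone hx) s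
  have hIoo : EqOn p₁ p₂ (Ioo 0 1) := by
    intro y hy
    let r : ℝ := max (16 * P + 1) (2 / y)
    have hr : 2 / y ≤ r := le_max_right _ _
    have hr0 : 0 < r := (div_pos two_pos hy.1).trans_le hr
    have hnorm : 16 * P + 1 ≤ ‖(r : ℂ)‖ := by
      rw [Complex.norm_real, Real.norm_of_nonneg hr0.le]
      exact le_max_left _ _
    have hUI : Ioo (1 / r) 1 ⊆ Icc (0 : ℝ) 1 := fun x hx =>
      ⟨(one_div_pos.2 hr0).le.trans hx.1.le, hx.2.le⟩
    have hrx (x : ℝ) (hx : x ∈ Ioo (1 / r) 1) : 1 ≤ (r : ℂ).re * x :=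
      ((div_lt_iff₀' hr0).1 hx.1).le
    refine potential_eqOn_of_mixedDeterminant_eq_zero Φ₁ Φ₂ isOpen_Ioo hUI
      (fun x hx => Φ₁.S_sq_ne_zero hp₁ hP₁ hnorm (hUI hx) (hrx x hx))
      (fun x hx => Φ₂.S_sq_ne_zero hp₂ hP₂ hnorm (hUI hx) (hrx x hx))
      (fun x hx => hzero x (hUI hx) _) ⟨?_, hy.2⟩
    rw [div_lt_iff₀ hr0]
    rw [div_le_iff₀ hy.1] at hr
    linarith
  exact hIoo.of_subset_closure hp₁ hp₂ Ioo_subset_Icc_self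
    (closure_Ioo (zero_ne_one' ℝ)).ge

end InverseUniqueness

section MaximumPrinciple

theorem second_deriv_nonpos_of_isLocalMax {f f' : ℝ → ℝ} {x₀ d : ℝ} (hmax : IsLocalMax f x₀)
    (hf : ∀ᶠ x in 𝓝 x₀, HasDerivAt f (f' x) x) (hf' : HasDerivAt f' d x₀) : d ≤ 0 := by
  by_contra! hd
  have hderiv : deriv f =ᶠ[𝓝 x₀] f' := hf.mono fun _ h => h.deriv
  have hsecond : deriv (deriv f) x₀ = d := hderiv.deriv_eq.trans hf'.deriv
  have hmin : IsLocalMin f x₀ := isLocalMin_of_deriv_deriv_pos (hd.trans_eq hsecond.symm)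
    hmax.deriv_eq_zero hf.self_of_nhds.continuousAt
  have hconst : f =ᶠ[𝓝 x₀] fun _ => f x₀ := by
    filter_upwards [hmax, hmin] with x using le_antisymm
  have hzero : deriv (deriv f) x₀ = 0 := by
    rw [hconst.deriv.deriv_eq, deriv_const', deriv_const]
  linarith

theorem deriv_nonneg_of_forall_Icc_le {f : ℝ → ℝ} {α t₀ d : ℝ} (hα : α < t₀)
    (hmax : ∀ t ∈ Icc α t₀, f t ≤ f t₀) (hf : HasDerivAt f d t₀) : 0 ≤ d := by
  have hslope := (hasDerivWithinAt_iff_tendsto_slope' self_notMem_Iio).1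
    (hf.hasDerivWithinAt (s := Iio t₀))
  refine ge_of_tendsto hslope ?_
  filter_upwards [Ioo_mem_nhdsLT hα] with t ht
  rw [slope_def_field]
  exact div_nonneg_of_nonpos (sub_nonpos.2 (hmax t ⟨ht.1.le, ht.2.le⟩)) (sub_nonpos.2 ht.2.le)

theorem nonpos_of_strict_subsolution {w wx wxx wt : ℝ → ℝ → ℝ} {a b α β : ℝ}
    (hw : ContinuousOn (fun p : ℝ × ℝ => w p.1 p.2) (Icc a b ×ˢ Icc α β))
    (hwx : ∀ t ∈ Ioc α β, ∀ x ∈ Ioo a b, HasDerivAt (fun y => w y t) (wx x t) x)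
    (hwxx : ∀ t ∈ Ioc α β, ∀ x ∈ Ioo a b, HasDerivAt (fun y => wx y t) (wxx x t) x)
    (hwt : ∀ t ∈ Ioc α β, ∀ x ∈ Ioo a b, HasDerivAt (fun r => w x r) (wt x t) t)
    (hsub : ∀ t ∈ Ioc α β, ∀ x ∈ Ioo a b, wt x t < wxx x t)
    (hinitial : ∀ x ∈ Icc a b, w x α ≤ 0) (hleft : ∀ t ∈ Icc α β, w a t ≤ 0)
    (hright : ∀ t ∈ Icc α β, w b t ≤ 0) : ∀ t ∈ Icc α β, ∀ x ∈ Icc a b, w x t ≤ 0 := by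
  intro t ht x hx
  obtain ⟨⟨x₀, t₀⟩, ⟨hx₀, ht₀⟩, hmax⟩ :=
    (isCompact_Icc.prod isCompact_Icc).exists_isMaxOn ⟨(x, t), hx, ht⟩ hw
  replace hmax (x t : ℝ) (hx : x ∈ Icc a b) (ht : t ∈ Icc α β) : w x t ≤ w x₀ t₀ :=
    hmax (show (x, t) ∈ Icc a b ×ˢ Icc α β from ⟨hx, ht⟩)
  refine (hmax x t hx ht).trans ?_
  by_contra! hpos
  have hx₀' : x₀ ∈ Ioo a b :=
    ⟨hx₀.1.lt_of_ne (by rintro rfl; exact (hleft t₀ ht₀).not_gt hpos),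
      hx₀.2.lt_of_ne (by rintro rfl; exact (hright t₀ ht₀).not_gt hpos)⟩
  have ht₀' : t₀ ∈ Ioc α β :=
    ⟨ht₀.1.lt_of_ne (by rintro rfl; exact (hinitial x₀ hx₀).not_gt hpos), ht₀.2⟩
  have hIoo : Ioo a b ∈ 𝓝 x₀ := isOpen_Ioo.mem_nhds hx₀'
  have hspace : wxx x₀ t₀ ≤ 0 := second_deriv_nonpos_of_isLocalMax
    (mem_of_superset hIoo fun y hy => hmax y t₀ (Ioo_subset_Icc_self hy) ht₀)
    (mem_of_superset hIoo (hwx t₀ ht₀')) (hwxx t₀ ht₀' x₀ hx₀')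
  have htime : 0 ≤ wt x₀ t₀ := deriv_nonneg_of_forall_Icc_le ht₀'.1
    (fun r hr => hmax x₀ r hx₀ ⟨hr.1, hr.2.trans ht₀.2⟩) (hwt t₀ ht₀' x₀ hx₀')
  linarith [hsub t₀ ht₀' x₀ hx₀']

end MaximumPrinciple

end HeatInverse

namespace IsHeatSolution
open Set MeasureTheory Filter Topology HeatInverse

variable {q a : ℝ → ℝ} {u ux uxx ut : ℝ → ℝ → ℝ}

section Basic

variable (hu : IsHeatSolution q a u ux uxx ut) {x t : ℝ}
include hu

theorem continuousOn : ContinuousOn (fun p : ℝ × ℝ => u p.1 p.2) (Icc 0 1 ×ˢ Ici 0) := hu.1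

theorem hasDerivAt_space (ht : 0 < t) (hx : x ∈ Icc (0 : ℝ) 1) :
    HasDerivAt (fun y => u y t) (ux x t) x := hu.2.1 t ht x hx

theorem hasDerivAt_space_deriv (ht : 0 < t) (hx : x ∈ Icc (0 : ℝ) 1) :
    HasDerivAt (fun y => ux y t) (uxx x t) x := hu.2.2.1 t ht x hx

theorem continuousOn_space_second_deriv (ht : 0 < t) :
    ContinuousOn (fun x => uxx x t) (Icc 0 1) := hu.2.2.2.1 t ht

theorem hasDerivAt_time (ht : 0 < t) (hx : x ∈ Icc (0 : ℝ) 1) :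
    HasDerivAt (fun s => u x s) (ut x t) t := hu.2.2.2.2.1 x hx t ht

theorem continuousOn_time_deriv (hx : x ∈ Icc (0 : ℝ) 1) :
    ContinuousOn (fun t => ut x t) (Ioi 0) := hu.2.2.2.2.2.1 x hx

theorem heat_eq (ht : 0 < t) (hx : x ∈ Ioo (0 : ℝ) 1) : ut x t = uxx x t - q x * u x t :=
  hu.2.2.2.2.2.2.1 x hx t ht

theorem initial_eq_zero (hx : x ∈ Icc (0 : ℝ) 1) : u x 0 = 0 := hu.2.2.2.2.2.2.2.1 x hx

theorem left_eq_zero (ht : 0 < t) : u 0 t = 0 := (hu.2.2.2.2.2.2.2.2 t ht).1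

theorem right_eq (ht : 0 < t) : u 1 t = a t := (hu.2.2.2.2.2.2.2.2 t ht).2

theorem continuousOn_space (ht : 0 ≤ t) : ContinuousOn (fun x => u x t) (Icc 0 1) :=
  hu.continuousOn.comp (f := fun x : ℝ => (x, t)) (by fun_prop) fun _ hx => ⟨hx, ht⟩

theorem continuousOn_time (hx : x ∈ Icc (0 : ℝ) 1) : ContinuousOn (fun t => u x t) (Ici 0) :=
  hu.continuousOn.comp (f := fun t : ℝ => (x, t)) (by fun_prop) fun _ ht => ⟨hx, ht⟩

theorem neg : IsHeatSolution q (fun t => -a t) (fun x t => -u x t) (fun x t => -ux x t)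
    (fun x t => -uxx x t) (fun x t => -ut x t) := by
  refine ⟨hu.continuousOn.neg, fun t ht x hx => (hu.hasDerivAt_space ht hx).neg,
    fun t ht x hx => (hu.hasDerivAt_space_deriv ht hx).neg,
    fun t ht => (hu.continuousOn_space_second_deriv ht).neg,
    fun x hx t ht => (hu.hasDerivAt_time ht hx).neg,
    fun x hx => (hu.continuousOn_time_deriv hx).neg, fun x hx t ht => ?_,
    fun x hx => neg_eq_zero.2 (hu.initial_eq_zero hx),
    fun t ht => ⟨neg_eq_zero.2 (hu.left_eq_zero ht), congrArg Neg.neg (hu.right_eq ht)⟩⟩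
  linear_combination -hu.heat_eq ht hx

end Basic

section TimeLipschitz

variable {α β : ℝ}

theorem exists_forall_slice_sub_le_mul (hu : IsHeatSolution q a u ux uxx ut) (hα : 0 < α)
    {x : ℝ} (hx : x ∈ Icc (0 : ℝ) 1) :
    ∃ M, ∀ t ∈ Icc α β, u x t - u x α ≤ M * (t - α) := by
  have htime : Icc α β ⊆ Ioi 0 := fun t ht => hα.trans_le ht.1
  obtain ⟨M, hM⟩ := isCompact_Icc.exists_bound_of_continuousOn
    ((hu.continuousOn_time_deriv hx).mono htime)
  exact ⟨M, fun t ht => (Real.le_norm_self _).trans <|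
    norm_image_sub_le_of_norm_deriv_le_segment'
      (fun t ht => (hu.hasDerivAt_time (htime ht) hx).hasDerivWithinAt)
      (fun t ht => hM t (Ico_subset_Icc_self ht)) t ht⟩

theorem exists_forall_space_second_deriv_sub_le (hq : ContinuousOn q (Icc 0 1))
    (hu : IsHeatSolution q a u ux uxx ut) (hα : 0 < α) :
    ∃ B, ∀ t ∈ Icc α β, ∀ x ∈ Icc (0 : ℝ) 1, uxx x α - q x * u x t ≤ B := by
  have hcont : ContinuousOn (fun p : ℝ × ℝ => uxx p.1 α - q p.1 * u p.1 p.2)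
      (Icc 0 1 ×ˢ Icc α β) :=
    ((hu.continuousOn_space_second_deriv hα).comp continuousOn_fst fun p hp => hp.1).sub
      ((hq.comp continuousOn_fst fun p hp => hp.1).mul
        (hu.continuousOn.mono (prod_mono subset_rfl fun t ht => hα.le.trans ht.1)))
  obtain ⟨B, hB⟩ := (isCompact_Icc.prod isCompact_Icc).exists_bound_of_continuousOn hcont
  exact ⟨B, fun t ht x hx => (Real.le_norm_self _).trans (hB (x, t) ⟨hx, ht⟩)⟩

theorem exists_forall_sub_le_mul (hq : ContinuousOn q (Icc 0 1))
    (hu : IsHeatSolution q a u ux uxx ut) (hα : 0 < α) :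
    ∃ K, ∀ t ∈ Icc α β, ∀ x ∈ Icc (0 : ℝ) 1, u x t - u x α ≤ K * (t - α) := by
  obtain ⟨B, hB⟩ := hu.exists_forall_space_second_deriv_sub_le (β := β) hq hα
  obtain ⟨L, hL⟩ := hu.exists_forall_slice_sub_le_mul (β := β) hα (left_mem_Icc.2 zero_le_one)
  obtain ⟨M, hM⟩ := hu.exists_forall_slice_sub_le_mul (β := β) hα (right_mem_Icc.2 zero_le_one)
  let K : ℝ := max (max L M) (B + 1)
  have hLK : L ≤ K := (le_max_left L M).trans (le_max_left _ _)
  have hMK : M ≤ K := (le_max_right L M).trans (le_max_left _ _)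
  have hBK : B + 1 ≤ K := le_max_right _ _
  have hle {m : ℝ} (hm : m ≤ K) {t : ℝ} (ht : t ∈ Icc α β) : m * (t - α) ≤ K * (t - α) :=
    mul_le_mul_of_nonneg_right hm (sub_nonneg.2 ht.1)
  refine ⟨K, fun t ht x hx => sub_nonpos.1 ?_⟩
  refine nonpos_of_strict_subsolution (w := fun x t => u x t - u x α - K * (t - α))
    (wx := fun x t => ux x t - ux x α) (wxx := fun x t => uxx x t - uxx x α)
    (wt := fun x t => ut x t - K) ?_ ?_ ?_ ?_ ?_ (by simp)
    (fun t ht => sub_nonpos.2 ((hL t ht).trans (hle hLK ht)))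
    (fun t ht => sub_nonpos.2 ((hM t ht).trans (hle hMK ht))) t ht x hx
  · exact ((hu.continuousOn.mono (prod_mono subset_rfl fun t ht => hα.le.trans ht.1)).sub
      ((hu.continuousOn_space hα.le).comp continuousOn_fst fun p hp => hp.1)).sub (by fun_prop)
  · exact fun t ht x hx => ((hu.hasDerivAt_space (hα.trans ht.1) (Ioo_subset_Icc_self hx)).sub
      (hu.hasDerivAt_space hα (Ioo_subset_Icc_self hx))).sub_const _
  · exact fun t ht x hx => (hu.hasDerivAt_space_deriv (hα.trans ht.1)
      (Ioo_subset_Icc_self hx)).sub (hu.hasDerivAt_space_deriv hα (Ioo_subset_Icc_self hx))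
  · exact fun t ht x hx => (((hu.hasDerivAt_time (hα.trans ht.1)
      (Ioo_subset_Icc_self hx)).sub_const _).sub
        (((hasDerivAt_id t).sub_const α).const_mul K)).congr_deriv (by ring)
  · intro t ht x hx
    rw [hu.heat_eq (hα.trans ht.1) hx]
    linarith [hB t (Ioc_subset_Icc_self ht) x (Ioo_subset_Icc_self hx)]

theorem exists_forall_abs_sub_le_mul (hq : ContinuousOn q (Icc 0 1))
    (hu : IsHeatSolution q a u ux uxx ut) (hα : 0 < α) :
    ∃ K, ∀ t ∈ Icc α β, ∀ x ∈ Icc (0 : ℝ) 1, |u x t - u x α| ≤ K * (t - α) := by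
  obtain ⟨K, hK⟩ := hu.exists_forall_sub_le_mul (β := β) hq hα
  obtain ⟨L, hL⟩ := hu.neg.exists_forall_sub_le_mul (β := β) hq hα
  refine ⟨max K L, fun t ht x hx => abs_le'.2 ⟨?_, ?_⟩⟩
  · exact (hK t ht x hx).trans
      (mul_le_mul_of_nonneg_right (le_max_left K L) (sub_nonneg.2 ht.1))
  · rw [neg_sub']
    exact (hL t ht x hx).trans
      (mul_le_mul_of_nonneg_right (le_max_right K L) (sub_nonneg.2 ht.1))

end TimeLipschitz

end IsHeatSolution

namespace HeatInverse
open Set MeasureTheory Filter Topology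

section LaplaceTransform

/-- The one-sided Laplace transform of `f` at the real point `s`; it is `0`, by the convention
for non-integrable functions, where the integral diverges. -/
noncomputable def laplace (f : ℝ → ℝ) (s : ℝ) : ℝ := ∫ t in Ioi 0, Real.exp (-(s * t)) * f t

theorem integrable_comp_mul {α : Type*} [MeasurableSpace α] {μ : Measure α} {F y : α → ℝ}
    {a b : ℝ} {g : ℝ → ℝ} (hF : Integrable F μ) (hy : AEMeasurable y μ)
    (hmem : ∀ᵐ x ∂μ, y x ∈ Icc a b) (hg : Continuous g) :
    Integrable (fun x => g (y x) * F x) μ := by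
  obtain ⟨B, hB⟩ := isCompact_Icc.exists_bound_of_continuousOn hg.continuousOn
  exact hF.bdd_mul (hg.measurable.comp_aemeasurable hy).aestronglyMeasurable
    (hmem.mono fun x hx => hB (y x) hx)

theorem integral_eval_mul_eq_zero_of_moments {α : Type*} [MeasurableSpace α] {μ : Measure α}
    {F y : α → ℝ} {a b : ℝ} (hF : Integrable F μ) (hy : AEMeasurable y μ)
    (hmem : ∀ᵐ x ∂μ, y x ∈ Icc a b) (hmoment : ∀ n : ℕ, ∫ x, y x ^ n * F x ∂μ = 0)
    (p : Polynomial ℝ) : ∫ x, p.eval (y x) * F x ∂μ = 0 := by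
  simp only [Polynomial.eval_eq_sum_range, Finset.sum_mul, mul_assoc]
  rw [integral_finsetSum _ fun n _ =>
    (integrable_comp_mul hF hy hmem (continuous_pow n)).const_mul (p.coeff n)]
  simp only [integral_const_mul, hmoment, mul_zero, Finset.sum_const_zero]

theorem integral_comp_mul_eq_zero_of_moments {α : Type*} [MeasurableSpace α] {μ : Measure α}
    {F y : α → ℝ} {a b : ℝ} {g : ℝ → ℝ} (hF : Integrable F μ) (hy : AEMeasurable y μ)
    (hmem : ∀ᵐ x ∂μ, y x ∈ Icc a b) (hmoment : ∀ n : ℕ, ∫ x, y x ^ n * F x ∂μ = 0)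
    (hg : Continuous g) : ∫ x, g (y x) * F x ∂μ = 0 := by
  have hclose (ε : ℝ) (hε : 0 < ε) : ‖∫ x, g (y x) * F x ∂μ‖ ≤ ε * ∫ x, ‖F x‖ ∂μ := by
    obtain ⟨p, hp⟩ := exists_polynomial_near_of_continuousOn a b g hg.continuousOn ε hε
    rw [← sub_zero (∫ x, g (y x) * F x ∂μ),
      ← integral_eval_mul_eq_zero_of_moments hF hy hmem hmoment p,
      ← integral_sub (integrable_comp_mul hF hy hmem hg)
        (integrable_comp_mul hF hy hmem p.continuous), ← integral_const_mul]
    refine norm_integral_le_of_norm_le (hF.norm.const_mul ε) (hmem.mono fun x hx => ?_)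
    rw [← sub_mul, norm_mul, norm_sub_rev, Real.norm_eq_abs]
    gcongr
    exact (hp _ hx).le
  have hlim : Tendsto (fun ε => ε * ∫ x, ‖F x‖ ∂μ) (𝓝[>] 0) (𝓝 0) :=
    tendsto_nhdsWithin_of_tendsto_nhds (Continuous.tendsto' (by fun_prop) 0 0 (zero_mul _))
  exact norm_le_zero_iff.1 (ge_of_tendsto hlim (eventually_mem_nhdsWithin.mono hclose))

theorem continuous_comp_neg_log {h : ℝ → ℝ} (hh : Continuous h) (hsupp : HasCompactSupport h)
    (hzero : h 0 = 0) : Continuous fun y => h (-Real.log y) := by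
  refine continuous_iff_continuousAt.2 fun y => ?_
  rcases eq_or_ne y 0 with rfl | hy
  · rw [continuousAt_iff_punctured_nhds, Real.log_zero, neg_zero, hzero]
    have hlog : Tendsto (fun y => -Real.log y) (𝓝[≠] 0) atTop :=
      tendsto_neg_atBot_atTop.comp Real.tendsto_log_nhdsNE_zero
    exact (hsupp.is_zero_at_infty.mono_left atTop_le_cocompact).comp hlog
  · exact hh.continuousAt.comp (Real.continuousAt_log hy).neg

/-- Lerch's uniqueness theorem: on the bounded variable `y = exp (-t)` the values of the
transform at `c + 1, c + 2, …` are moments, and polynomials in `y` are dense. -/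
theorem ae_eq_zero_of_laplace_eq_zero {f : ℝ → ℝ} {c : ℝ}
    (hf : ∀ s > c, IntegrableOn (fun t => Real.exp (-(s * t)) * f t) (Ioi 0))
    (hlaplace : ∀ s > c, laplace f s = 0) : f =ᵐ[volume.restrict (Ioi 0)] 0 := by
  have hF := hf (c + 1) (lt_add_one c)
  have hmoment (n : ℕ) :
      ∫ t in Ioi 0, Real.exp (-t) ^ n * (Real.exp (-((c + 1) * t)) * f t) = 0 := by
    have hn : c < c + 1 + n := by linarith [n.cast_nonneg (α := ℝ)]
    refine (integral_congr_ae (ae_of_all _ fun t => ?_)).trans (hlaplace _ hn)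
    simp only [← mul_assoc, ← Real.exp_nat_mul, ← Real.exp_add]
    ring_nf
  have hmem : ∀ᵐ t ∂volume.restrict (Ioi 0), Real.exp (-t) ∈ Icc (0 : ℝ) 1 :=
    ae_restrict_of_forall_mem measurableSet_Ioi fun t ht =>
      ⟨(Real.exp_pos _).le, Real.exp_le_one_iff.2 (neg_nonpos.2 (le_of_lt ht))⟩
  have hzero := isOpen_Ioi.ae_eq_zero_of_integral_contDiff_smul_eq_zero
    hF.locallyIntegrableOn fun g hg hsupp hpos => by
      have hvanish (t : ℝ) (ht : t ∉ Ioi 0) : g t = 0 :=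
        image_eq_zero_of_notMem_tsupport fun h => ht (hpos h)
      have hintegral := integral_comp_mul_eq_zero_of_moments hF (by fun_prop) hmem hmoment
        (continuous_comp_neg_log hg.continuous hsupp (hvanish 0 self_notMem_Ioi))
      rw [← setIntegral_eq_integral_of_forall_compl_eq_zero (s := Ioi 0)
        fun t ht => by rw [hvanish t ht, zero_smul]]
      simpa only [Real.log_exp, neg_neg, smul_eq_mul] using hintegral
  refine (ae_restrict_iff' measurableSet_Ioi).2 (hzero.mono fun t h ht => ?_)
  exact (mul_eq_zero.1 (h ht)).resolve_left (Real.exp_ne_zero _)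

theorem continuousOn_laplace {f : ℝ → ℝ} {c : ℝ}
    (hf : ∀ s > c, IntegrableOn (fun t => Real.exp (-(s * t)) * f t) (Ioi 0)) :
    ContinuousOn (laplace f) (Ioi c) := by
  refine isOpen_Ioi.continuousOn_iff.2 fun s hs => ?_
  obtain ⟨m, hcm, hms⟩ := exists_between (mem_Ioi.1 hs)
  refine continuousAt_of_dominated (F := fun s t => Real.exp (-(s * t)) * f t)
    (bound := fun t => ‖Real.exp (-(m * t)) * f t‖) ?_ ?_
    (hf m hcm).norm (ae_of_all _ fun t => Continuous.continuousAt (by fun_prop))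
  · filter_upwards [Ioi_mem_nhds hs] with r hr using (hf r hr).aestronglyMeasurable
  · filter_upwards [Ioi_mem_nhds hms] with r hr
    refine ae_restrict_of_forall_mem measurableSet_Ioi fun t ht => ?_
    rw [norm_mul, norm_mul, Real.norm_of_nonneg (Real.exp_pos _).le,
      Real.norm_of_nonneg (Real.exp_pos _).le]
    have ht₀ : 0 ≤ t := le_of_lt ht
    have hmr : m ≤ r := le_of_lt hr
    gcongr

theorem exists_eventually_laplace_ne_zero {f : ℝ → ℝ} {c : ℝ}
    (hf : ∀ s > c, IntegrableOn (fun t => Real.exp (-(s * t)) * f t) (Ioi 0))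
    (hne : ¬ f =ᵐ[volume.restrict (Ioi 0)] 0) :
    ∃ s₀ > c, ∀ᶠ s in 𝓝 s₀, laplace f s ≠ 0 := by
  obtain ⟨s₀, hs₀, hs₀_ne⟩ : ∃ s₀ > c, laplace f s₀ ≠ 0 := by
    by_contra! hzero
    exact hne (ae_eq_zero_of_laplace_eq_zero hf hzero)
  exact ⟨s₀, hs₀, ((continuousOn_laplace hf).continuousAt (Ioi_mem_nhds hs₀)).eventually_ne hs₀_ne⟩

end LaplaceTransform

section Pairing

/-- The pairing `∫₀¹ φ(x) u(x,t) dx` of a function of position with the profile of `u` at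
time `t`. -/
noncomputable def pairing (φ : ℝ → ℂ) (u : ℝ → ℝ → ℝ) (t : ℝ) : ℂ :=
  ∫ x in (0 : ℝ)..1, φ x * (u x t : ℂ)

theorem continuousOn_pairing {φ : ℝ → ℂ} {u : ℝ → ℝ → ℝ} (hφ : ContinuousOn φ (Icc 0 1))
    (hu : ContinuousOn (fun p : ℝ × ℝ => u p.1 p.2) (Icc 0 1 ×ˢ Ici 0)) :
    ContinuousOn (pairing φ u) (Ici 0) := by
  let proj (x : ℝ) : ℝ := projIcc (0 : ℝ) 1 zero_le_one x
  have hproj : Continuous proj := continuous_subtype_val.comp continuous_projIcc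
  have hproj_mem (x : ℝ) : proj x ∈ Icc (0 : ℝ) 1 := (projIcc 0 1 zero_le_one x).2
  have hextend : Continuous (Function.uncurry fun t x => φ (proj x) * (u (proj x) (max t 0) : ℂ)) :=
    ((hφ.comp_continuous hproj hproj_mem).comp continuous_snd).mul
      (Complex.continuous_ofReal.comp (hu.comp_continuous
        (f := fun p : ℝ × ℝ => (proj p.2, max p.1 0)) (by fun_prop)
        fun p => ⟨hproj_mem p.2, le_max_right p.1 0⟩))
  refine (intervalIntegral.continuous_parametric_intervalIntegral_of_continuous' hextend
    0 1).continuousOn.congr fun t ht => intervalIntegral.integral_congr fun x hx => ?_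
  rw [uIcc_of_le zero_le_one] at hx
  simp only [proj, projIcc_of_mem zero_le_one hx, max_eq_left (mem_Ici.1 ht)]

theorem norm_pairing_le {φ : ℝ → ℂ} {u : ℝ → ℝ → ℝ} {t A B : ℝ}
    (hφ : ∀ x ∈ Icc (0 : ℝ) 1, ‖φ x‖ ≤ A) (hu : ∀ x ∈ Icc (0 : ℝ) 1, |u x t| ≤ B) :
    ‖pairing φ u t‖ ≤ A * B := by
  have hA : 0 ≤ A := (norm_nonneg _).trans (hφ 0 (left_mem_Icc.2 zero_le_one))
  have hbound : ∀ x ∈ uIoc (0 : ℝ) 1, ‖φ x * (u x t : ℂ)‖ ≤ A * B := by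
    intro x hx
    rw [uIoc_of_le zero_le_one] at hx
    rw [norm_mul, Complex.norm_real]
    exact mul_le_mul (hφ x (Ioc_subset_Icc_self hx)) (hu x (Ioc_subset_Icc_self hx))
      (norm_nonneg _) hA
  simpa only [pairing, sub_zero, abs_one, mul_one] using
    intervalIntegral.norm_integral_le_of_norm_le_const hbound

theorem exp_neg_mul_mul_exp_mul (s c t : ℝ) :
    Real.exp (-(s * t)) * Real.exp (c * t) = Real.exp ((c - s) * t) := by
  rw [← Real.exp_add]
  ring_nf

theorem tendsto_exp_smul_pairing {φ : ℝ → ℂ} {u : ℝ → ℝ → ℝ} {C c s : ℝ}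
    (hφ : ContinuousOn φ (Icc 0 1))
    (hb : ∀ x ∈ Icc (0 : ℝ) 1, ∀ t > 0, |u x t| ≤ C * Real.exp (c * t)) (hs : c < s) :
    Tendsto (fun t => Real.exp (-(s * t)) • pairing φ u t) atTop (𝓝 0) := by
  obtain ⟨A, hA⟩ := isCompact_Icc.exists_bound_of_continuousOn hφ
  have hlim : Tendsto (fun t : ℝ => A * C * Real.exp ((c - s) * t)) atTop (𝓝 0) := by
    have hexponent : Tendsto (fun t : ℝ => (c - s) * t) atTop atBot :=
      tendsto_id.const_mul_atTop_of_neg (sub_neg.2 hs)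
    simpa using (Real.tendsto_exp_atBot.comp hexponent).const_mul (A * C)
  refine squeeze_zero_norm' ((eventually_gt_atTop 0).mono fun t ht => ?_) hlim
  rw [norm_smul, Real.norm_of_nonneg (Real.exp_pos _).le]
  calc Real.exp (-(s * t)) * ‖pairing φ u t‖
      ≤ Real.exp (-(s * t)) * (A * (C * Real.exp (c * t))) := by
        gcongr
        exact norm_pairing_le hA fun x hx => hb x hx t ht
    _ = A * C * Real.exp ((c - s) * t) := by
        rw [← exp_neg_mul_mul_exp_mul]
        ring

theorem hasDerivWithinAt_exp_smul {E : Type*} [NormedAddCommGroup E] [NormedSpace ℝ E]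
    {f : ℝ → E} {f' : E} {S : Set ℝ} {t : ℝ} (s : ℝ) (hf : HasDerivWithinAt f f' S t) :
    HasDerivWithinAt (fun t => Real.exp (-(s * t)) • f t)
      (Real.exp (-(s * t)) • (f' - s • f t)) S t := by
  have hexp : HasDerivAt (fun t => Real.exp (-(s * t))) (Real.exp (-(s * t)) * -(s * 1)) t :=
    ((hasDerivAt_id t).const_mul s).neg.exp
  refine (hexp.hasDerivWithinAt.smul hf).congr_deriv ?_
  module

theorem integral_Ioi_of_hasDeriv_right_of_tendsto {E : Type*} [NormedAddCommGroup E]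
    [NormedSpace ℝ E] [CompleteSpace E] {f f' : ℝ → E} {a : ℝ} {m : E}
    (hcont : ContinuousOn f (Ici a)) (hderiv : ∀ t ∈ Ioi a, HasDerivWithinAt f (f' t) (Ioi t) t)
    (hint : IntegrableOn f' (Ioi a)) (hlim : Tendsto f atTop (𝓝 m)) :
    ∫ t in Ioi a, f' t = m - f a := by
  refine tendsto_nhds_unique (intervalIntegral_tendsto_integral_Ioi a hint tendsto_id)
    ((hlim.sub_const (f a)).congr' ((eventually_ge_atTop a).mono fun b hb => ?_))
  exact (intervalIntegral.integral_eq_sub_of_hasDeriv_right_of_le hb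
    (hcont.mono Icc_subset_Ici_self) (fun t ht => hderiv t ht.1)
    ((intervalIntegrable_iff_integrableOn_Ioc_of_le hb).2
      (hint.mono_set Ioc_subset_Ioi_self))).symm

end Pairing

end HeatInverse

namespace IsHeatSolution
open Set MeasureTheory Filter Topology HeatInverse

variable {q a : ℝ → ℝ} {u ux uxx ut : ℝ → ℝ → ℝ} {φ D : ℝ → ℂ} {t s C c : ℝ}

theorem continuousOn_mul_ofReal (hu : IsHeatSolution q a u ux uxx ut)
    (hφ : ContinuousOn φ (Icc 0 1)) (ht : 0 ≤ t) :
    ContinuousOn (fun x => φ x * (u x t : ℂ)) (uIcc 0 1) := by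
  rw [uIcc_of_le zero_le_one]
  exact hφ.mul (Complex.continuous_ofReal.comp_continuousOn (hu.continuousOn_space ht))

theorem tendsto_pairing_slope (hq : ContinuousOn q (Icc 0 1))
    (hu : IsHeatSolution q a u ux uxx ut) (hφ : ContinuousOn φ (Icc 0 1)) (ht : 0 < t) :
    Tendsto (fun r => pairing φ (fun x r => slope (u x) t r) r) (𝓝[>] t)
      (𝓝 (pairing φ ut t)) := by
  have hunit : uIoc (0 : ℝ) 1 ⊆ Icc 0 1 := uIoc_of_le (zero_le_one' ℝ) ▸ Ioc_subset_Icc_self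
  obtain ⟨K, hK⟩ := hu.exists_forall_abs_sub_le_mul (β := t + 1) hq ht
  refine intervalIntegral.tendsto_integral_filter_of_dominated_convergence
    (fun x => ‖φ x‖ * K) ?_ ?_ ?_ ?_
  · filter_upwards [self_mem_nhdsWithin] with r hr
    have hslope : ContinuousOn (fun x => slope (u x) t r) (Icc 0 1) := by
      simp only [slope_def_field]
      exact ((hu.continuousOn_space (ht.trans hr).le).sub
        (hu.continuousOn_space ht.le)).div_const _
    exact ((hφ.mul (Complex.continuous_ofReal.comp_continuousOn hslope)).mono
      hunit).aestronglyMeasurable measurableSet_uIoc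
  · filter_upwards [Ioo_mem_nhdsGT (lt_add_one t)] with r hr
    refine ae_of_all _ fun x hx => ?_
    rw [norm_mul, Complex.norm_real, Real.norm_eq_abs, slope_def_field, abs_div,
      abs_of_pos (sub_pos.2 hr.1)]
    gcongr
    exact (div_le_iff₀ (sub_pos.2 hr.1)).2 (hK r (Ioo_subset_Icc_self hr) x (hunit hx))
  · exact (hφ.norm.mul continuousOn_const).intervalIntegrable_of_Icc zero_le_one
  · refine ae_of_all _ fun x hx => ((Complex.continuous_ofReal.tendsto _).comp ?_).const_mul _
    exact (hasDerivWithinAt_iff_tendsto_slope' self_notMem_Ioi).1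
      (hu.hasDerivAt_time ht (hunit hx)).hasDerivWithinAt

theorem hasDerivWithinAt_pairing (hq : ContinuousOn q (Icc 0 1))
    (hu : IsHeatSolution q a u ux uxx ut) (hφ : ContinuousOn φ (Icc 0 1)) (ht : 0 < t) :
    HasDerivWithinAt (pairing φ u) (pairing φ ut t) (Ioi t) t := by
  rw [hasDerivWithinAt_iff_tendsto_slope' self_notMem_Ioi]
  refine (hu.tendsto_pairing_slope hq hφ ht).congr' ?_
  filter_upwards [self_mem_nhdsWithin] with r hr
  have hr0 : 0 ≤ r := (ht.trans hr).le
  rw [slope_def_module, pairing, pairing, pairing, ← intervalIntegral.integral_sub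
    (hu.continuousOn_mul_ofReal hφ hr0).intervalIntegrable
    (hu.continuousOn_mul_ofReal hφ ht.le).intervalIntegrable, ← intervalIntegral.integral_smul]
  refine intervalIntegral.integral_congr fun x _ => ?_
  simp only [slope_def_field, Complex.real_smul]
  push_cast
  ring

theorem intervalIntegrable_green (hq : ContinuousOn q (Icc 0 1))
    (hu : IsHeatSolution q a u ux uxx ut) {σ : ℂ} (hφ : ContinuousOn φ (Icc 0 1)) (ht : 0 < t) :
    IntervalIntegrable (fun x => φ x * uxx x t - (q x + σ) * φ x * u x t) volume 0 1 := by
  have hofReal {f : ℝ → ℝ} (hf : ContinuousOn f (Icc 0 1)) :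
      ContinuousOn (fun x => (f x : ℂ)) (Icc 0 1) :=
    Complex.continuous_ofReal.comp_continuousOn hf
  exact ((hφ.mul (hofReal (hu.continuousOn_space_second_deriv ht))).sub
    ((((hofReal hq).add continuousOn_const).mul hφ).mul
      (hofReal (hu.continuousOn_space ht.le)))).intervalIntegrable_of_Icc zero_le_one

theorem integral_green (hq : ContinuousOn q (Icc 0 1)) (hu : IsHeatSolution q a u ux uxx ut)
    {σ : ℂ} (hφ : IsSchrodingerSol q σ φ D) (ht : 0 < t) :
    ∫ x in (0 : ℝ)..1, (φ x * uxx x t - (q x + σ) * φ x * u x t) =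
      φ 1 * ux 1 t - D 1 * u 1 t - (φ 0 * ux 0 t - D 0 * u 0 t) := by
  have hderiv : ∀ x ∈ uIcc (0 : ℝ) 1, HasDerivAt (fun x => φ x * ux x t - D x * u x t)
      (φ x * uxx x t - (q x + σ) * φ x * u x t) x := by
    intro x hx
    rw [uIcc_of_le zero_le_one] at hx
    exact (((hφ.hasDerivAt x hx).mul (hu.hasDerivAt_space_deriv ht hx).ofReal_comp).sub
      ((hφ.hasDerivAt_deriv x hx).mul
        (hu.hasDerivAt_space ht hx).ofReal_comp)).congr_deriv (by ring)
  exact intervalIntegral.integral_eq_sub_of_hasDerivAt hderiv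
    (hu.intervalIntegrable_green hq hφ.continuousOn ht)

theorem pairing_time_deriv (hq : ContinuousOn q (Icc 0 1)) (hu : IsHeatSolution q a u ux uxx ut)
    {σ : ℂ} (hφ : IsSchrodingerSol q σ φ D) (hφ0 : φ 0 = 0) (ht : 0 < t) :
    pairing φ ut t = σ * pairing φ u t + (φ 1 * ux 1 t - D 1 * a t) := by
  have hsplit : ∀ x ∈ Ioo (0 : ℝ) 1, φ x * (ut x t : ℂ) =
      (φ x * uxx x t - (q x + σ) * φ x * u x t) + σ * (φ x * (u x t : ℂ)) := by
    intro x hx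
    rw [hu.heat_eq ht hx]
    push_cast
    ring
  rw [pairing, intervalIntegral.integral_congr_Ioo_of_le zero_le_one hsplit,
    intervalIntegral.integral_add (hu.intervalIntegrable_green hq hφ.continuousOn ht)
      ((hu.continuousOn_mul_ofReal hφ.continuousOn ht.le).intervalIntegrable.const_mul σ),
    intervalIntegral.integral_const_mul, hu.integral_green hq hφ ht, hφ0, hu.left_eq_zero ht,
    hu.right_eq ht, pairing]
  simp only [Complex.ofReal_zero, zero_mul, mul_zero, sub_zero]
  ring

theorem hasDerivWithinAt_exp_smul_pairing (hq : ContinuousOn q (Icc 0 1))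
    (hu : IsHeatSolution q a u ux uxx ut) (hφ : IsSchrodingerSol q s φ D) (hφ0 : φ 0 = 0)
    (ht : 0 < t) :
    HasDerivWithinAt (fun t => Real.exp (-(s * t)) • pairing φ u t)
      (Real.exp (-(s * t)) • (φ 1 * ux 1 t - D 1 * a t)) (Ioi t) t := by
  refine (hasDerivWithinAt_exp_smul s
    (hu.hasDerivWithinAt_pairing hq hφ.continuousOn ht)).congr_deriv ?_
  rw [hu.pairing_time_deriv hq hφ hφ0 ht, Complex.real_smul (x := s), add_sub_cancel_left]

theorem pairing_zero (hu : IsHeatSolution q a u ux uxx ut) : pairing φ u 0 = 0 := by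
  refine intervalIntegral.integral_zero_ae (ae_of_all _ fun x hx => ?_)
  rw [uIoc_of_le zero_le_one] at hx
  rw [hu.initial_eq_zero (Ioc_subset_Icc_self hx), Complex.ofReal_zero, mul_zero]

theorem integrableOn_exp_mul_boundary (hu : IsHeatSolution q a u ux uxx ut)
    (hb : ∀ x ∈ Icc (0 : ℝ) 1, ∀ t > 0, |u x t| ≤ C * Real.exp (c * t)) (hs : c < s) :
    IntegrableOn (fun t => Real.exp (-(s * t)) * a t) (Ioi 0) := by
  have hone : (1 : ℝ) ∈ Icc (0 : ℝ) 1 := right_mem_Icc.2 zero_le_one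
  have hcont : ContinuousOn (fun t => Real.exp (-(s * t)) * a t) (Ioi 0) :=
    ContinuousOn.mul (by fun_prop) (((hu.continuousOn_time hone).mono Ioi_subset_Ici_self).congr
      fun t ht => (hu.right_eq ht).symm)
  refine ((integrableOn_exp_mul_Ioi (sub_neg.2 hs) 0).const_mul C).mono'
    (hcont.aestronglyMeasurable measurableSet_Ioi)
    (ae_restrict_of_forall_mem measurableSet_Ioi fun t ht => ?_)
  rw [norm_mul, Real.norm_of_nonneg (Real.exp_pos _).le, Real.norm_eq_abs, ← hu.right_eq ht]
  calc Real.exp (-(s * t)) * |u 1 t| ≤ Real.exp (-(s * t)) * (C * Real.exp (c * t)) := by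
        gcongr
        exact hb 1 hone t ht
    _ = C * Real.exp ((c - s) * t) := by
        rw [← exp_neg_mul_mul_exp_mul]
        ring

end IsHeatSolution

namespace HeatInverse
open Set MeasureTheory Filter Topology

section Flux

theorem mul_laplace_boundary_eq_zero_of_flux_eq {q₁ q₂ a : ℝ → ℝ}
    {u₁ ux₁ uxx₁ ut₁ u₂ ux₂ uxx₂ ut₂ : ℝ → ℝ → ℝ} {φ₁ D₁ φ₂ D₂ : ℝ → ℂ} {C₁ c₁ C₂ c₂ s : ℝ}
    (hq₁ : ContinuousOn q₁ (Icc 0 1)) (hq₂ : ContinuousOn q₂ (Icc 0 1))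
    (hu₁ : IsHeatSolution q₁ a u₁ ux₁ uxx₁ ut₁) (hu₂ : IsHeatSolution q₂ a u₂ ux₂ uxx₂ ut₂)
    (hb₁ : ∀ x ∈ Icc (0 : ℝ) 1, ∀ t > 0, |u₁ x t| ≤ C₁ * Real.exp (c₁ * t))
    (hb₂ : ∀ x ∈ Icc (0 : ℝ) 1, ∀ t > 0, |u₂ x t| ≤ C₂ * Real.exp (c₂ * t))
    (hflux : ∀ t > 0, ux₁ 1 t = ux₂ 1 t)
    (hφ₁ : IsSchrodingerSol q₁ s φ₁ D₁) (hφ₂ : IsSchrodingerSol q₂ s φ₂ D₂)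
    (hφ₁0 : φ₁ 0 = 0) (hφ₂0 : φ₂ 0 = 0) (hs₁ : c₁ < s) (hs₂ : c₂ < s) :
    (φ₁ 1 * D₂ 1 - φ₂ 1 * D₁ 1) * (laplace a s : ℂ) = 0 := by
  have hcont {q : ℝ → ℝ} {u ux uxx ut : ℝ → ℝ → ℝ} {φ D : ℝ → ℂ}
      (hu : IsHeatSolution q a u ux uxx ut) (hφ : IsSchrodingerSol q s φ D) :
      ContinuousOn (fun t => Real.exp (-(s * t)) • pairing φ u t) (Ici 0) :=
    ContinuousOn.smul (f := fun t => Real.exp (-(s * t))) (by fun_prop)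
      (continuousOn_pairing hφ.continuousOn hu.continuousOn)
  have hderiv (t : ℝ) (ht : t ∈ Ioi 0) : HasDerivWithinAt
      (fun t => φ₂ 1 * (Real.exp (-(s * t)) • pairing φ₁ u₁ t) -
        φ₁ 1 * (Real.exp (-(s * t)) • pairing φ₂ u₂ t))
      ((φ₁ 1 * D₂ 1 - φ₂ 1 * D₁ 1) * ((Real.exp (-(s * t)) * a t : ℝ) : ℂ)) (Ioi t) t := by
    refine (((hu₁.hasDerivWithinAt_exp_smul_pairing hq₁ hφ₁ hφ₁0 ht).const_mul (φ₂ 1)).sub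
      ((hu₂.hasDerivWithinAt_exp_smul_pairing hq₂ hφ₂ hφ₂0 ht).const_mul (φ₁ 1))).congr_deriv ?_
    rw [hflux t ht, Complex.real_smul, Complex.real_smul, Complex.ofReal_mul]
    ring
  have hlim := ((tendsto_exp_smul_pairing hφ₁.continuousOn hb₁ hs₁).const_mul (φ₂ 1)).sub
    ((tendsto_exp_smul_pairing hφ₂.continuousOn hb₂ hs₂).const_mul (φ₁ 1))
  have hFTC := integral_Ioi_of_hasDeriv_right_of_tendsto
    (((hcont hu₁ hφ₁).const_mul (φ₂ 1)).sub ((hcont hu₂ hφ₂).const_mul (φ₁ 1))) hderiv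
    ((hu₁.integrableOn_exp_mul_boundary hb₁ hs₁).ofReal.const_mul _) hlim
  rw [integral_const_mul, integral_complex_ofReal] at hFTC
  simpa [hu₁.pairing_zero, hu₂.pairing_zero, laplace] using hFTC

end Flux

section Uniqueness

theorem eq_zero_of_eventually_ofReal_eq_zero {F : ℂ → ℂ} (hF : Differentiable ℂ F) {s₀ : ℝ}
    (hzero : ∀ᶠ s : ℝ in 𝓝 s₀, F s = 0) : F = 0 := by
  have hofReal : Tendsto Complex.ofReal (𝓝[≠] s₀) (𝓝[≠] (s₀ : ℂ)) :=
    Complex.continuous_ofReal.continuousWithinAt.tendsto_nhdsWithin fun _ hs =>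
      Complex.ofReal_injective.ne hs
  refine AnalyticOnNhd.eq_of_frequently_eq (z₀ := (s₀ : ℂ)) (fun z _ => hF.analyticAt z)
    analyticOnNhd_const (hofReal.frequently ?_)
  exact (hzero.filter_mono nhdsWithin_le_nhds).frequently

variable {q₁ q₂ a : ℝ → ℝ} {u₁ ux₁ uxx₁ ut₁ u₂ ux₂ uxx₂ ut₂ : ℝ → ℝ → ℝ}

theorem mixedDeterminant_one_eq_zero_of_flux_eq (Φ₁ : FundamentalSystem fun x => q₁ (1 - x))
    (Φ₂ : FundamentalSystem fun x => q₂ (1 - x))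
    (hq₁ : ContinuousOn q₁ (Icc 0 1)) (hq₂ : ContinuousOn q₂ (Icc 0 1))
    (ha : ¬ a =ᵐ[volume.restrict (Ioi 0)] 0)
    (hu₁ : IsHeatSolution q₁ a u₁ ux₁ uxx₁ ut₁) (hu₂ : IsHeatSolution q₂ a u₂ ux₂ uxx₂ ut₂)
    {C₁ c₁ C₂ c₂ : ℝ} (hb₁ : ∀ x ∈ Icc (0 : ℝ) 1, ∀ t > 0, |u₁ x t| ≤ C₁ * Real.exp (c₁ * t))
    (hb₂ : ∀ x ∈ Icc (0 : ℝ) 1, ∀ t > 0, |u₂ x t| ≤ C₂ * Real.exp (c₂ * t))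
    (hflux : ∀ t > 0, ux₁ 1 t = ux₂ 1 t) (s : ℂ) : mixedDeterminant Φ₁ Φ₂ s 1 = 0 := by
  obtain ⟨s₀, hs₀, hne⟩ := exists_eventually_laplace_ne_zero (c := max c₁ c₂)
    (fun s hs => hu₁.integrableOn_exp_mul_boundary hb₁ ((le_max_left c₁ c₂).trans_lt hs)) ha
  refine congrFun (eq_zero_of_eventually_ofReal_eq_zero (s₀ := s₀)
    (differentiable_mixedDeterminant Φ₁ Φ₂ (right_mem_Icc.2 zero_le_one)) ?_) s
  filter_upwards [hne, Ioi_mem_nhds hs₀] with s hs_ne hs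
  have hsol {q : ℝ → ℝ} (Φ : FundamentalSystem fun x => q (1 - x)) :
      IsSchrodingerSol q s (Φ.dirichlet s) (Φ.dirichletDeriv s) := by
    simpa only [sub_sub_cancel] using Φ.isSol_dirichlet s
  have hproduct := mul_laplace_boundary_eq_zero_of_flux_eq hq₁ hq₂ hu₁ hu₂ hb₁ hb₂ hflux
    (hsol Φ₁) (hsol Φ₂) (Φ₁.dirichlet_zero s) (Φ₂.dirichlet_zero s)
    ((le_max_left c₁ c₂).trans_lt hs) ((le_max_right c₁ c₂).trans_lt hs)
  simp only [FundamentalSystem.dirichlet_one, FundamentalSystem.dirichletDeriv_one] at hproduct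
  exact (mul_eq_zero.1 hproduct).resolve_right (Complex.ofReal_ne_zero.2 hs_ne)

end Uniqueness

end HeatInverse

theorem HeatGrowthBound.exists_forall_abs_le {u ux : ℝ → ℝ → ℝ}
    (hb : ∃ C > 0, ∃ c > 0, HeatGrowthBound u ux C c) :
    ∃ C c, ∀ x ∈ Set.Icc (0 : ℝ) 1, ∀ t > 0, |u x t| ≤ C * Real.exp (c * t) :=
  let ⟨C, _, c, _, h⟩ := hb
  ⟨C, c, fun x hx t ht => (le_add_of_nonneg_right (abs_nonneg _)).trans (h x hx t ht.le)⟩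

open Set MeasureTheory HeatInverse in
theorem flux_at_right_end_determines_potential_general {q₁ q₂ a : ℝ → ℝ}
    {u₁ ux₁ uxx₁ ut₁ u₂ ux₂ uxx₂ ut₂ : ℝ → ℝ → ℝ}
    (hq₁ : ContinuousOn q₁ (Icc 0 1)) (hq₂ : ContinuousOn q₂ (Icc 0 1))
    (ha : ¬ a =ᵐ[volume.restrict (Ioi 0)] 0)
    (hu₁ : IsHeatSolution q₁ a u₁ ux₁ uxx₁ ut₁) (hu₂ : IsHeatSolution q₂ a u₂ ux₂ uxx₂ ut₂)
    (hb₁ : ∃ C c, ∀ x ∈ Icc (0 : ℝ) 1, ∀ t > 0, |u₁ x t| ≤ C * Real.exp (c * t))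
    (hb₂ : ∃ C c, ∀ x ∈ Icc (0 : ℝ) 1, ∀ t > 0, |u₂ x t| ≤ C * Real.exp (c * t))
    (hflux : ∀ t > 0, ux₁ 1 t = ux₂ 1 t) : EqOn q₁ q₂ (Icc 0 1) := by
  obtain ⟨C₁, c₁, hb₁⟩ := hb₁
  obtain ⟨C₂, c₂, hb₂⟩ := hb₂
  have hreflect : MapsTo (fun x : ℝ => 1 - x) (Icc 0 1) (Icc 0 1) := fun _ => Icc.one_sub_mem
  have hp₁ : ContinuousOn (fun x => q₁ (1 - x)) (Icc 0 1) := hq₁.comp (by fun_prop) hreflect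
  have hp₂ : ContinuousOn (fun x => q₂ (1 - x)) (Icc 0 1) := hq₂.comp (by fun_prop) hreflect
  obtain ⟨Φ₁⟩ := nonempty_fundamentalSystem hp₁
  obtain ⟨Φ₂⟩ := nonempty_fundamentalSystem hp₂
  have heq := potential_eqOn_of_mixedDeterminant_one_eq_zero Φ₁ Φ₂ hp₁ hp₂
    (mixedDeterminant_one_eq_zero_of_flux_eq Φ₁ Φ₂ hq₁ hq₂ ha hu₁ hu₂ hb₁ hb₂ hflux)
  exact fun x hx => by simpa only [sub_sub_cancel] using heq (hreflect hx)

/-- if two classical heat solutions for continuous potentials `q1, q2`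
with the same admissible boundary pulse `a` have the same flux at `x = 1` for all
`t > 0`, then `q1 = q2` on `[0,1]`. -/
theorem flux_at_right_end_determines_potential
    (q1 q2 a : ℝ → ℝ)
    (hq1 : ContinuousOn q1 (Set.Icc 0 1)) (hq2 : ContinuousOn q2 (Set.Icc 0 1))
    (ha : IsAdmissiblePulse a)
    (u1 ux1 uxx1 ut1 u2 ux2 uxx2 ut2 : ℝ → ℝ → ℝ)
    (hu1 : IsHeatSolution q1 a u1 ux1 uxx1 ut1)
    (hu2 : IsHeatSolution q2 a u2 ux2 uxx2 ut2)
    (hb1 : ∃ C > (0:ℝ), ∃ c > (0:ℝ), HeatGrowthBound u1 ux1 C c)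
    (hb2 : ∃ C > (0:ℝ), ∃ c > (0:ℝ), HeatGrowthBound u2 ux2 C c)
    (hflux : ∀ t > (0:ℝ), ux1 1 t = ux2 1 t) :
    ∀ x ∈ Set.Icc (0:ℝ) 1, q1 x = q2 x :=
  fun _ hx => flux_at_right_end_determines_potential_general hq1 hq2 ha.2.2 hu1 hu2
    (HeatGrowthBound.exists_forall_abs_le hb1) (HeatGrowthBound.exists_forall_abs_le hb2) hflux hx
end

section
/- Let q1 and q2 be continuous real-valued potentials on [0,1] and let S be an infinite subset of the positive reals having a finite accumulation point. If for every λ ∈ S one has ∂x φ(1,−λ;q1) · φ(1,−λ;q2) = ∂x φ(1,−λ;q2) · φ(1,−λ;q1) (i.e. the Weyl-type ratios ∂x φ(1,−λ;q)/φ(1,−λ;q) for q1 and q2 coincide on S), then q1 = q2 on [0,1]. -/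
/-- `IsSLSolution q nu f f'` : `f` solves `-f'' + q f = nu * f` on `[0,1]`
with `f 0 = 0`, `f' 0 = 1`, where `f'` is the derivative of `f` on `[0,1]`. -/
def IsSLSolution (q : ℝ → ℝ) (ν : ℝ) (φ φ' : ℝ → ℝ) : Prop :=
  (∀ x ∈ Set.Icc (0:ℝ) 1, HasDerivAt φ (φ' x) x) ∧
  (∀ x ∈ Set.Icc (0:ℝ) 1, HasDerivAt φ' (q x * φ x - ν * φ x) x) ∧
  φ 0 = 0 ∧ φ' 0 = 1

/-!
Let `m = -c(1) / s(1)` be the Weyl function of a potential, where `c` and `s` are the solutions of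
`u'' = (q + l) u` with the initial values of cosine and sine. After the reflection `x ↦ 1 - x` the
ratios in the theorem become `-m`, so `c₁(1) s₂(1) = c₂(1) s₁(1)` on a set with an accumulation
point, hence for every `l`, both sides being entire. This says `m₁ = m₂`, and then for every `x`
the entire function `F = c₁ s₂ - c₂ s₁` of `l` equals `ψ₁ s₂ - ψ₂ s₁`, where `ψ = c + m s` is the
Weyl solution, vanishing at `1`. As `l = k²` goes to infinity, `ψ` decays like `exp (-|Re k| x)`
while `s` is at most of size `exp (|Re k| x) / |k|`. So `F` tends to zero along the imaginary axis,
and since it has order at most `1 / 2`, it vanishes by Phragmén–Lindelöf and Liouville.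
Differentiating `c₁ s₂ = c₂ s₁` in `x` yields `s₁² = s₂²` because the Wronskians are one, and two
more derivatives yield `q₁ = q₂` away from the isolated zeros of `s₁`.
-/

open Set Filter Topology

section LinearODE

lemma exists_differentiable_fixedPoint {F : Type*} [NormedAddCommGroup F] [NormedSpace ℂ F]
    [CompleteSpace F] {N : ℂ → F →L[ℂ] F} (hN : Differentiable ℂ N)
    (hsum : ∀ l, Summable fun n ↦ ‖N l ^ n‖) (v : F) :
    ∃ y : ℂ → F, Differentiable ℂ y ∧ ∀ l, y l = v + N l (y l) := by
  have hunit (l : ℂ) : IsUnit (1 - N l) := isUnit_iff_exists.2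
    ⟨_, (hsum l).of_norm.one_sub_mul_tsum_pow, (hsum l).of_norm.tsum_pow_mul_one_sub⟩
  refine ⟨fun l ↦ Ring.inverse (1 - N l) v, fun l ↦ ?_, fun l ↦ ?_⟩
  · have hinv : DifferentiableAt ℂ (fun l ↦ Ring.inverse (1 - N l)) l :=
      DifferentiableAt.comp (g := Ring.inverse) l (differentiableAt_inverse (hunit l))
        ((hN l).const_sub 1)
    exact hinv.clm_apply (differentiableAt_const v)
  · rw [← sub_eq_iff_eq_add]
    exact congr($(Ring.mul_inverse_cancel _ (hunit l)) v)

variable {E : Type*} [NormedAddCommGroup E] [NormedSpace ℂ E] {a b : ℝ}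

lemma continuous_apply_projIcc (hab : a ≤ b) (A : C(Icc a b, E →L[ℂ] E)) (f : C(Icc a b, E)) :
    Continuous fun t ↦ A (projIcc a b hab t) (f (projIcc a b hab t)) :=
  (A.continuous.comp continuous_projIcc).clm_apply (f.continuous.comp continuous_projIcc)

lemma norm_integral_apply_projIcc_le (hab : a ≤ b) (A : C(Icc a b, E →L[ℂ] E)) {f : C(Icc a b, E)}
    {C : ℝ} {n : ℕ} (hf : ∀ x : Icc a b, ‖f x‖ ≤ C * ((x - a) ^ n / n.factorial)) (x : Icc a b) :
    ‖∫ t in a..x, A (projIcc a b hab t) (f (projIcc a b hab t))‖ ≤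
      ‖A‖ * C * ((x - a) ^ (n + 1) / (n + 1).factorial) := by
  calc ‖∫ t in a..x, A (projIcc a b hab t) (f (projIcc a b hab t))‖
      ≤ ∫ t in a..x, ‖A‖ * C * ((t - a) ^ n / n.factorial) := by
        refine intervalIntegral.norm_integral_le_of_norm_le x.2.1 (Eventually.of_forall ?_)
          (Continuous.intervalIntegrable (by fun_prop) _ _)
        intro t ht
        rw [projIcc_of_mem hab ⟨ht.1.le, ht.2.trans x.2.2⟩, mul_assoc]
        exact (A _).le_of_opNorm_le_of_le (A.norm_coe_le_norm _) (hf _)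
    _ = ‖A‖ * C * ((x - a) ^ (n + 1) / (n + 1).factorial) := by
        rw [intervalIntegral.integral_const_mul, intervalIntegral.integral_div,
          intervalIntegral.integral_comp_sub_right (fun t ↦ t ^ n), integral_pow,
          Nat.factorial_succ]
        push_cast
        field_simp
        ring

/-- The Volterra operator `f ↦ ∫ₐˣ A(t) f(t) dt` on `C([a, b], E)`, as a bounded bilinear map in
`A` and `f`; its fixed points up to a constant are the solutions of `y' = A y`. The projection to
`[a, b]` extends the integrand to `ℝ`. -/
noncomputable def volterra (hab : a ≤ b) :
    C(Icc a b, E →L[ℂ] E) →L[ℂ] C(Icc a b, E) →L[ℂ] C(Icc a b, E) :=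
  LinearMap.mkContinuous₂
    (LinearMap.mk₂ ℂ (fun (A : C(Icc a b, E →L[ℂ] E)) (f : C(Icc a b, E)) ↦
        (⟨fun x ↦ ∫ t in a..x, A (projIcc a b hab t) (f (projIcc a b hab t)),
          (intervalIntegral.continuous_primitive
            (continuous_apply_projIcc hab A f).intervalIntegrable a).comp
            continuous_subtype_val⟩ : C(Icc a b, E)))
      (fun A B f ↦ by
        ext x
        exact intervalIntegral.integral_add
          ((continuous_apply_projIcc hab A f).intervalIntegrable _ _)
          ((continuous_apply_projIcc hab B f).intervalIntegrable _ _))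
      (fun c A f ↦ by
        ext x
        exact intervalIntegral.integral_smul c _)
      (fun A f g ↦ by
        ext x
        simpa using intervalIntegral.integral_add
          ((continuous_apply_projIcc hab A f).intervalIntegrable _ _)
          ((continuous_apply_projIcc hab A g).intervalIntegrable _ _))
      (fun c A f ↦ by
        ext x
        simp))
    (b - a) fun A f ↦ by
      refine (ContinuousMap.norm_le _ (mul_nonneg
        (mul_nonneg (sub_nonneg.2 hab) (norm_nonneg A)) (norm_nonneg f))).2 fun x ↦ ?_
      calc ‖∫ t in a..x, A (projIcc a b hab t) (f (projIcc a b hab t))‖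
          ≤ ‖A‖ * ‖f‖ * ((x - a) ^ 1 / (1 : ℕ).factorial) :=
            norm_integral_apply_projIcc_le hab A (n := 0) (by simpa using f.norm_coe_le_norm) x
        _ = (x - a) * ‖A‖ * ‖f‖ := by simp; ring
        _ ≤ (b - a) * ‖A‖ * ‖f‖ := by gcongr; exact x.2.2

lemma norm_volterra_pow_apply_le (hab : a ≤ b) (A : C(Icc a b, E →L[ℂ] E)) (n : ℕ)
    (f : C(Icc a b, E)) (x : Icc a b) :
    ‖((volterra hab A) ^ n) f x‖ ≤ ‖A‖ ^ n * ‖f‖ * ((x - a) ^ n / n.factorial) := by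
  induction n generalizing x with
  | zero => simpa using f.norm_coe_le_norm x
  | succ n ih =>
    calc ‖((volterra hab A) ^ (n + 1)) f x‖
        = ‖volterra hab A (((volterra hab A) ^ n) f) x‖ := by rw [pow_succ']; rfl
      _ ≤ ‖A‖ * (‖A‖ ^ n * ‖f‖) * ((x - a) ^ (n + 1) / (n + 1).factorial) :=
        norm_integral_apply_projIcc_le hab A ih x
      _ = ‖A‖ ^ (n + 1) * ‖f‖ * ((x - a) ^ (n + 1) / (n + 1).factorial) := by ring

lemma norm_volterra_pow_le (hab : a ≤ b) (A : C(Icc a b, E →L[ℂ] E)) (n : ℕ) :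
    ‖volterra hab A ^ n‖ ≤ (‖A‖ * (b - a)) ^ n / n.factorial := by
  have hC : 0 ≤ (‖A‖ * (b - a)) ^ n / n.factorial := by
    have := sub_nonneg.2 hab
    positivity
  refine ContinuousLinearMap.opNorm_le_bound _ hC fun f ↦ ?_
  refine (ContinuousMap.norm_le _ (mul_nonneg hC (norm_nonneg f))).2 fun x ↦ ?_
  have hxa : 0 ≤ x - a := sub_nonneg.2 x.2.1
  calc ‖((volterra hab A) ^ n) f x‖
      ≤ ‖A‖ ^ n * ‖f‖ * ((x - a) ^ n / n.factorial) := norm_volterra_pow_apply_le hab A n f x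
    _ ≤ ‖A‖ ^ n * ‖f‖ * ((b - a) ^ n / n.factorial) := by gcongr; exact x.2.2
    _ = (‖A‖ * (b - a)) ^ n / n.factorial * ‖f‖ := by rw [mul_pow]; ring

theorem exists_differentiable_solution_linear_ode [CompleteSpace E] (hab : a ≤ b)
    {A : ℂ → C(Icc a b, E →L[ℂ] E)} (hA : Differentiable ℂ A) (v : E) :
    ∃ y : ℂ → ℝ → E, (∀ l, y l a = v) ∧
      (∀ l, ∀ x (hx : x ∈ Icc a b), HasDerivAt (y l) (A l ⟨x, hx⟩ (y l x)) x) ∧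
      ∀ x ∈ Icc a b, Differentiable ℂ (y · x) := by
  have hvolterra : Differentiable ℂ (volterra (E := E) hab) := by fun_prop
  obtain ⟨w, hw, hfix⟩ := exists_differentiable_fixedPoint (N := fun l ↦ volterra hab (A l))
    (hvolterra.comp hA)
    (fun l ↦ (Real.summable_pow_div_factorial _).of_nonneg_of_le (fun n ↦ norm_nonneg _)
      (norm_volterra_pow_le hab (A l))) (ContinuousMap.const _ v)
  let y (l : ℂ) (x : ℝ) : E :=
    v + ∫ t in a..x, A l (projIcc a b hab t) (w l (projIcc a b hab t))
  have hy (l : ℂ) {x : ℝ} (hx : x ∈ Icc a b) : y l x = w l ⟨x, hx⟩ :=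
    congr($(hfix l) ⟨x, hx⟩).symm
  refine ⟨y, fun l ↦ by simp [y], fun l x hx ↦ ?_, fun x hx ↦ ?_⟩
  · have := ((continuous_apply_projIcc hab (A l) (w l)).integral_hasStrictDerivAt a x).hasDerivAt
    rw [projIcc_of_mem hab hx] at this
    rw [hy l hx]
    exact this.const_add v
  · simp only [hy _ hx]
    exact (ContinuousMap.evalCLM ℂ (⟨x, hx⟩ : Icc a b)).differentiable.comp hw

end LinearODE

section EntireFunctions

variable {E : Type*} [NormedAddCommGroup E] [NormedSpace ℂ E] {f : ℂ → E}

lemma norm_le_of_norm_le_on_axes (hf : Differentiable ℂ f)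
    (hgrowth : ∃ c < (2 : ℝ), ∃ B, f =O[Bornology.cobounded ℂ] fun z ↦ Real.exp (B * ‖z‖ ^ c))
    {C : ℝ} (hre : ∀ x : ℝ, ‖f x‖ ≤ C) (him : ∀ x : ℝ, ‖f (x * Complex.I)‖ ≤ C) (z : ℂ) :
    ‖f z‖ ≤ C := by
  obtain ⟨c, hc, B, hB⟩ := hgrowth
  have hquadrant (s : Set ℂ) : ∃ c < (2 : ℝ), ∃ B,
      f =O[Bornology.cobounded ℂ ⊓ 𝓟 s] fun z ↦ Real.exp (B * ‖z‖ ^ c) :=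
    ⟨c, hc, B, hB.mono inf_le_left⟩
  rcases le_total 0 z.re with hzre | hzre <;> rcases le_total 0 z.im with hzim | hzim
  · exact PhragmenLindelof.quadrant_I hf.diffContOnCl (hquadrant _) (fun x _ ↦ hre x)
      (fun x _ ↦ him x) hzre hzim
  · exact PhragmenLindelof.quadrant_IV hf.diffContOnCl (hquadrant _) (fun x _ ↦ hre x)
      (fun x _ ↦ him x) hzre hzim
  · exact PhragmenLindelof.quadrant_II hf.diffContOnCl (hquadrant _) (fun x _ ↦ hre x)
      (fun x _ ↦ him x) hzre hzim
  · exact PhragmenLindelof.quadrant_III hf.diffContOnCl (hquadrant _) (fun x _ ↦ hre x)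
      (fun x _ ↦ him x) hzre hzim

-- The substitution `l = w² i` maps both coordinate axes to the imaginary axis.
theorem eq_zero_of_tendsto_zero_on_imaginary_axis (hf : Differentiable ℂ f)
    (hgrowth : ∃ c < (1 : ℝ), ∃ B, f =O[Bornology.cobounded ℂ] fun z ↦ Real.exp (B * ‖z‖ ^ c))
    (hlim : Tendsto (fun t : ℝ ↦ f (t * Complex.I)) (cocompact ℝ) (𝓝 0)) (z : ℂ) : f z = 0 := by
  obtain ⟨c, hc, B, hB⟩ := hgrowth
  let onAxis : ZeroAtInftyContinuousMap ℝ E :=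
    ⟨⟨fun t ↦ f (t * Complex.I), hf.continuous.comp (by fun_prop)⟩, hlim⟩
  have haxis (t : ℝ) : ‖f (t * Complex.I)‖ ≤ ‖onAxis.toBCF‖ := onAxis.toBCF.norm_coe_le_norm t
  set g : ℂ → E := fun w ↦ f (w ^ 2 * Complex.I)
  have hg : Differentiable ℂ g := hf.comp (by fun_prop)
  have hgrowth_g : g =O[Bornology.cobounded ℂ] fun w ↦ Real.exp (B * ‖w‖ ^ (2 * c)) := by
    have hsq : Tendsto (fun w : ℂ ↦ w ^ 2 * Complex.I) (Bornology.cobounded ℂ)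
        (Bornology.cobounded ℂ) := by
      rw [← tendsto_norm_atTop_iff_cobounded]
      simpa [Function.comp_def] using
        (tendsto_pow_atTop two_ne_zero).comp (tendsto_norm_cobounded_atTop (E := ℂ))
    refine (hB.comp_tendsto hsq).congr_right fun w ↦ ?_
    simp [Real.rpow_mul (norm_nonneg w)]
  have hbdd (w : ℂ) : ‖g w‖ ≤ ‖onAxis.toBCF‖ := by
    refine norm_le_of_norm_le_on_axes hg ⟨2 * c, by linarith, B, hgrowth_g⟩ (fun x ↦ ?_)
      (fun x ↦ ?_) w
    · simpa only [g, Complex.ofReal_pow] using haxis (x ^ (2 : ℕ))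
    · simpa only [g, mul_pow, Complex.I_sq, mul_neg_one, Complex.ofReal_neg,
        Complex.ofReal_pow] using haxis (-x ^ (2 : ℕ))
  have hconst (w : ℂ) : g w = g 0 := hg.apply_eq_apply_of_bounded
    (isBounded_iff_forall_norm_le.2 ⟨_, by rintro _ ⟨w, rfl⟩; exact hbdd w⟩) w 0
  have hsurj (z : ℂ) : f z = g 0 := by
    obtain ⟨w, hw⟩ := IsAlgClosed.exists_pow_nat_eq (-z * Complex.I) two_pos
    rw [← hconst w]
    simp [g, hw, mul_assoc]
  simp only [hsurj] at hlim ⊢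
  exact tendsto_nhds_unique tendsto_const_nhds hlim

-- A square root `k` of `t i` satisfies `|Re k| = √(|t| / 2)`.
lemma eq_zero_of_norm_apply_sq_le (hf : Differentiable ℂ f) {A B C K : ℝ}
    (hgrowth : ∀ k : ℂ, 1 ≤ ‖k‖ → ‖f (k ^ 2)‖ ≤ A * Real.exp (B * ‖k‖))
    (hdecay : ∀ k : ℂ, K ≤ |k.re| → ‖f (k ^ 2)‖ ≤ C / ‖k‖) (z : ℂ) : f z = 0 := by
  refine eq_zero_of_tendsto_zero_on_imaginary_axis hf ⟨1 / 2, by norm_num, B, ?_⟩ ?_ z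
  · refine .of_bound A ?_
    filter_upwards [tendsto_norm_cobounded_atTop.eventually_ge_atTop 1] with l hl
    obtain ⟨k, rfl⟩ := IsAlgClosed.exists_pow_nat_eq l two_pos
    have hk : ‖k ^ 2‖ ^ (1 / 2 : ℝ) = ‖k‖ := by
      rw [norm_pow, ← Real.sqrt_eq_rpow, Real.sqrt_sq (norm_nonneg k)]
    rw [hk, Real.norm_of_nonneg (Real.exp_pos _).le]
    exact hgrowth k (by rwa [norm_pow, one_le_sq_iff₀ (norm_nonneg k)] at hl)
  · have hsqrt : Tendsto (fun t : ℝ ↦ √|t|) (cocompact ℝ) atTop :=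
      Real.tendsto_sqrt_atTop.comp (tendsto_norm_cocompact_atTop (E := ℝ))
    refine squeeze_zero_norm' ?_ (tendsto_const_nhds (x := C).div_atTop hsqrt)
    filter_upwards [hsqrt.eventually_ge_atTop (√2 * K)] with t ht
    obtain ⟨k, hk⟩ := IsAlgClosed.exists_pow_nat_eq (t * Complex.I) two_pos
    have hnorm : ‖k‖ = √|t| := by
      rw [← Real.sqrt_sq (norm_nonneg k), ← norm_pow, hk]
      simp
    have hre : √|t| = √2 * |k.re| := by
      have hsq : k.re ^ 2 = k.im ^ 2 := by
        simpa [pow_two, sub_eq_zero] using congr($(hk).re)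
      rw [← hnorm, Complex.norm_def, Complex.normSq_apply, ← pow_two, ← pow_two, ← hsq, ← two_mul,
        Real.sqrt_mul zero_le_two, Real.sqrt_sq_eq_abs]
    rw [← hk, ← hnorm]
    exact hdecay k (le_of_mul_le_mul_left (hre ▸ ht) (by positivity))

lemma eq_of_accPt_of_eqOn [CompleteSpace E] {g : ℂ → E} (hf : Differentiable ℂ f)
    (hg : Differentiable ℂ g) {S : Set ℂ} {p : ℂ} (hp : AccPt p (𝓟 S)) (h : EqOn f g S) : f = g :=
  AnalyticOnNhd.eq_of_frequently_eq (fun z _ ↦ hf.analyticAt z) (fun z _ ↦ hg.analyticAt z)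
    ((accPt_iff_frequently_nhdsNE.1 hp).mono h)

end EntireFunctions

section Schrodinger

/-- `u` is a solution on `[0, 1]` of the Schrödinger equation `u'' = (q + l) u`, with derivative
`u'`. The spectral parameter is `ν = -l`. -/
def IsSchrodingerSolution (q : ℝ → ℂ) (l : ℂ) (u u' : ℝ → ℂ) : Prop :=
  ∀ x ∈ Icc (0 : ℝ) 1, HasDerivAt u (u' x) x ∧ HasDerivAt u' ((q x + l) * u x) x

namespace IsSchrodingerSolution

variable {q : ℝ → ℂ} {l : ℂ} {u u' v v' : ℝ → ℂ}

lemma const_mul_add_const_mul (hu : IsSchrodingerSolution q l u u')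
    (hv : IsSchrodingerSolution q l v v') (a b : ℂ) :
    IsSchrodingerSolution q l (fun x ↦ a * u x + b * v x) (fun x ↦ a * u' x + b * v' x) :=
  fun x hx ↦ ⟨((hu x hx).1.const_mul a).add ((hv x hx).1.const_mul b),
    (((hu x hx).2.const_mul a).add ((hv x hx).2.const_mul b)).congr_deriv (by ring)⟩

lemma comp_one_sub (hu : IsSchrodingerSolution q l u u') :
    IsSchrodingerSolution (fun x ↦ q (1 - x)) l (fun x ↦ u (1 - x)) (fun x ↦ -u' (1 - x)) := by
  intro x hx
  obtain ⟨hd, hd'⟩ := hu (1 - x) ⟨sub_nonneg.2 hx.2, sub_le_self 1 hx.1⟩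
  exact ⟨hd.comp_const_sub 1 x, (hd'.comp_const_sub 1 x).neg.congr_deriv (neg_neg _)⟩

lemma wronskian_eq (hu : IsSchrodingerSolution q l u u') (hv : IsSchrodingerSolution q l v v')
    {x : ℝ} (hx : x ∈ Icc (0 : ℝ) 1) :
    u x * v' x - u' x * v x = u 0 * v' 0 - u' 0 * v 0 := by
  have hderiv (x : ℝ) (hx : x ∈ Icc (0 : ℝ) 1) :
      HasDerivAt (fun x ↦ u x * v' x - u' x * v x) 0 x :=
    (((hu x hx).1.mul (hv x hx).2).sub ((hu x hx).2.mul (hv x hx).1)).congr_deriv (by ring)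
  exact constant_of_has_deriv_right_zero
    (fun x hx ↦ (hderiv x hx).continuousAt.continuousWithinAt)
    (fun x hx ↦ (hderiv x (Ico_subset_Icc_self hx)).hasDerivWithinAt) x hx

end IsSchrodingerSolution

/-- The solutions `c` and `s` of `u'' = (q + l) u` with the initial values of cosine and sine,
depending analytically on `l`. -/
structure FundamentalSystem (q : ℝ → ℂ) where
  (c c' s s' : ℂ → ℝ → ℂ)
  isSolution_c : ∀ l, IsSchrodingerSolution q l (c l) (c' l)
  isSolution_s : ∀ l, IsSchrodingerSolution q l (s l) (s' l)
  c_zero : ∀ l, c l 0 = 1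
  c'_zero : ∀ l, c' l 0 = 0
  s_zero : ∀ l, s l 0 = 0
  s'_zero : ∀ l, s' l 0 = 1
  differentiable_c : ∀ x ∈ Icc (0 : ℝ) 1, Differentiable ℂ (c · x)
  differentiable_s : ∀ x ∈ Icc (0 : ℝ) 1, Differentiable ℂ (s · x)

lemma differentiable_const_add_smul {F : Type*} [NormedAddCommGroup F] [NormedSpace ℂ F] (a b : F) :
    Differentiable ℂ fun l : ℂ ↦ a + l • b := by
  fun_prop

lemma exists_isSchrodingerSolution {q : ℝ → ℂ} (hq : ContinuousOn q (Icc 0 1)) (a b : ℂ) :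
    ∃ u u' : ℂ → ℝ → ℂ, (∀ l, IsSchrodingerSolution q l (u l) (u' l)) ∧
      (∀ l, u l 0 = a) ∧ (∀ l, u' l 0 = b) ∧
      ∀ x ∈ Icc (0 : ℝ) 1, Differentiable ℂ (u · x) := by
  let fst := ContinuousLinearMap.fst ℂ ℂ ℂ
  let snd := ContinuousLinearMap.snd ℂ ℂ ℂ
  let inl := ContinuousLinearMap.inl ℂ ℂ ℂ
  let inr := ContinuousLinearMap.inr ℂ ℂ ℂ
  let A : C(Icc (0 : ℝ) 1, ℂ × ℂ →L[ℂ] ℂ × ℂ) := ⟨fun x ↦ inl ∘L snd + q x • inr ∘L fst,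
    continuous_const.add (hq.domRestrict.smul continuous_const)⟩
  let B : C(Icc (0 : ℝ) 1, ℂ × ℂ →L[ℂ] ℂ × ℂ) := .const _ (inr ∘L fst)
  have hA : Differentiable ℂ fun l : ℂ ↦ A + l • B := differentiable_const_add_smul A B
  obtain ⟨y, hy0, hy, hdiff⟩ := exists_differentiable_solution_linear_ode zero_le_one hA (a, b)
  refine ⟨fun l x ↦ (y l x).1, fun l x ↦ (y l x).2, fun l x hx ↦ ?_, fun l ↦ by simp [hy0],
    fun l ↦ by simp [hy0], fun x hx ↦ (hdiff x hx).fst⟩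
  refine ⟨((hasFDerivAt_fst (𝕜 := ℝ)).comp_hasDerivAt x (hy l x hx)).congr_deriv ?_,
    ((hasFDerivAt_snd (𝕜 := ℝ)).comp_hasDerivAt x (hy l x hx)).congr_deriv ?_⟩
  · simp [A, B, fst, snd, inl, inr]
  · simp [A, B, fst, snd, inl, inr, add_mul]

namespace FundamentalSystem

variable {q : ℝ → ℂ}

protected lemma nonempty (hq : ContinuousOn q (Icc 0 1)) : Nonempty (FundamentalSystem q) := by
  obtain ⟨c, c', hc, hc0, hc'0, hcd⟩ := exists_isSchrodingerSolution hq 1 0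
  obtain ⟨s, s', hs, hs0, hs'0, hsd⟩ := exists_isSchrodingerSolution hq 0 1
  exact ⟨⟨c, c', s, s', hc, hs, hc0, hc'0, hs0, hs'0, hcd, hsd⟩⟩

variable (Φ : FundamentalSystem q) {l : ℂ} {x : ℝ}

lemma wronskian_eq_one (l : ℂ) (hx : x ∈ Icc (0 : ℝ) 1) :
    Φ.c l x * Φ.s' l x - Φ.c' l x * Φ.s l x = 1 := by
  simp [(Φ.isSolution_c l).wronskian_eq (Φ.isSolution_s l) hx, Φ.c_zero, Φ.s_zero, Φ.s'_zero]

lemma eq_const_mul_add_const_mul {u u' : ℝ → ℂ} (hu : IsSchrodingerSolution q l u u')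
    (hx : x ∈ Icc (0 : ℝ) 1) :
    u x = u 0 * Φ.c l x + u' 0 * Φ.s l x ∧ u' x = u 0 * Φ.c' l x + u' 0 * Φ.s' l x := by
  have hus : u x * Φ.s' l x - u' x * Φ.s l x = u 0 := by
    simp [hu.wronskian_eq (Φ.isSolution_s l) hx, Φ.s_zero, Φ.s'_zero]
  have hcu : Φ.c l x * u' x - Φ.c' l x * u x = u' 0 := by
    simp [(Φ.isSolution_c l).wronskian_eq hu hx, Φ.c_zero, Φ.c'_zero]
  rw [← hus, ← hcu]
  constructor
  · linear_combination -u x * Φ.wronskian_eq_one l hx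
  · linear_combination -u' x * Φ.wronskian_eq_one l hx

/-- The solution with Dirichlet data `u 1 = 0`, `u' 1 = -1` at the right end point;
`dirichlet l / s l 1` is the Weyl solution. -/
noncomputable def dirichlet (l : ℂ) (x : ℝ) : ℂ := Φ.s l 1 * Φ.c l x + -Φ.c l 1 * Φ.s l x

/-- The derivative of `dirichlet`. -/
noncomputable def dirichlet' (l : ℂ) (x : ℝ) : ℂ := Φ.s l 1 * Φ.c' l x + -Φ.c l 1 * Φ.s' l x

lemma isSolution_dirichlet (l : ℂ) :
    IsSchrodingerSolution q l (Φ.dirichlet l) (Φ.dirichlet' l) :=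
  (Φ.isSolution_c l).const_mul_add_const_mul (Φ.isSolution_s l) _ _

lemma dirichlet_zero (l : ℂ) : Φ.dirichlet l 0 = Φ.s l 1 := by
  simp [dirichlet, Φ.c_zero, Φ.s_zero]

lemma dirichlet'_zero (l : ℂ) : Φ.dirichlet' l 0 = -Φ.c l 1 := by
  simp [dirichlet', Φ.c'_zero, Φ.s'_zero]

lemma dirichlet_one (l : ℂ) : Φ.dirichlet l 1 = 0 := by
  rw [dirichlet]; ring

lemma dirichlet'_one (l : ℂ) : Φ.dirichlet' l 1 = -1 := by
  rw [dirichlet']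
  linear_combination -Φ.wronskian_eq_one l (right_mem_Icc.2 zero_le_one)

end FundamentalSystem

lemma IsSchrodingerSolution.eq_of_eq_at_zero {q : ℝ → ℂ} {l : ℂ} {x : ℝ} {u u' v v' : ℝ → ℂ}
    (hu : IsSchrodingerSolution q l u u') (hq : ContinuousOn q (Icc 0 1))
    (hv : IsSchrodingerSolution q l v v') (h0 : u 0 = v 0) (h0' : u' 0 = v' 0)
    (hx : x ∈ Icc (0 : ℝ) 1) : u x = v x ∧ u' x = v' x := by
  obtain ⟨Φ⟩ := FundamentalSystem.nonempty hq
  obtain ⟨hux, hux'⟩ := Φ.eq_const_mul_add_const_mul hu hx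
  obtain ⟨hvx, hvx'⟩ := Φ.eq_const_mul_add_const_mul hv hx
  exact ⟨by rw [hux, hvx, h0, h0'], by rw [hux', hvx', h0, h0']⟩

end Schrodinger

section Estimates

variable {q : ℝ → ℂ} {k : ℂ} {M x : ℝ}

lemma norm_sinh_le_exp_abs_re (z : ℂ) : ‖Complex.sinh z‖ ≤ Real.exp |z.re| := by
  calc ‖Complex.sinh z‖
      = ‖Complex.exp z - Complex.exp (-z)‖ / 2 := by simp [Complex.sinh]
    _ ≤ (Real.exp z.re + Real.exp (-z.re)) / 2 := by
        gcongr
        simpa only [Complex.norm_exp, Complex.neg_re] using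
          norm_sub_le (Complex.exp z) (Complex.exp (-z))
    _ ≤ Real.exp |z.re| := by
        have h₁ := Real.exp_le_exp.2 (le_abs_self z.re)
        have h₂ := Real.exp_le_exp.2 (neg_le_abs z.re)
        linarith

lemma norm_sinh_mul_ofReal_le (z : ℂ) {t : ℝ} (ht : 0 ≤ t) :
    ‖Complex.sinh (z * t)‖ ≤ Real.exp (|z.re| * t) := by
  simpa [abs_mul, abs_of_nonneg ht] using norm_sinh_le_exp_abs_re (z * t)

lemma sinh_abs_re_le_norm_sinh (z : ℂ) : Real.sinh |z.re| ≤ ‖Complex.sinh z‖ := by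
  calc Real.sinh |z.re|
      = |Real.exp z.re - Real.exp (-z.re)| / 2 := by
        rw [← Real.abs_sinh, Real.sinh_eq, abs_div, abs_two]
    _ ≤ ‖Complex.exp z - Complex.exp (-z)‖ / 2 := by
        gcongr
        simpa only [Complex.norm_exp, Complex.neg_re] using
          abs_norm_sub_norm_le (Complex.exp z) (Complex.exp (-z))
    _ = ‖Complex.sinh z‖ := by simp [Complex.sinh]

lemma abs_inner_mul_add_inner_mul_le (k v w : ℂ) :
    |2 * inner ℝ v (k * w) + 2 * inner ℝ w (k * v)| ≤ 2 * |k.re| * (‖v‖ ^ 2 + ‖w‖ ^ 2) := by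
  have hinner : 2 * inner ℝ v (k * w) + 2 * inner ℝ w (k * v) = 2 * k.re * (2 * inner ℝ v w) := by
    simp only [Complex.inner, Complex.mul_re, Complex.mul_im, Complex.conj_re, Complex.conj_im]
    ring
  have hvw : |2 * inner ℝ v w| ≤ ‖v‖ ^ 2 + ‖w‖ ^ 2 := by
    rw [abs_mul, abs_two]
    linarith [abs_real_inner_le_norm v w, two_mul_le_add_sq ‖v‖ ‖w‖]
  rw [hinner, abs_mul, abs_mul, abs_two]
  gcongr

lemma abs_inner_mul_le {p : ℂ} (hp : ‖p‖ ≤ M) (hk : 1 ≤ ‖k‖) (u v : ℂ) :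
    |2 * inner ℝ v (p * u)| ≤ M * (‖v‖ ^ 2 + ‖k * u‖ ^ 2) := by
  have hM : 0 ≤ M := (norm_nonneg p).trans hp
  have hpu : ‖p * u‖ ≤ M * ‖k * u‖ := by
    rw [norm_mul, norm_mul]
    gcongr
    exact le_mul_of_one_le_left (norm_nonneg u) hk
  calc |2 * inner ℝ v (p * u)|
      ≤ 2 * (‖v‖ * ‖p * u‖) := by
        rw [abs_mul, abs_two]
        gcongr
        exact abs_real_inner_le_norm v (p * u)
    _ ≤ M * (2 * ‖v‖ * ‖k * u‖) := by nlinarith [norm_nonneg v]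
    _ ≤ M * (‖v‖ ^ 2 + ‖k * u‖ ^ 2) := by
        gcongr
        exact two_mul_le_add_sq _ _

namespace IsSchrodingerSolution

variable {u u' : ℝ → ℂ}

lemma norm_sq_add_norm_sq_le (hu : IsSchrodingerSolution q (k ^ 2) u u')
    (hM : ∀ x ∈ Icc (0 : ℝ) 1, ‖q x‖ ≤ M) (hk : 1 ≤ ‖k‖) (hx : x ∈ Icc (0 : ℝ) 1) :
    ‖u' x‖ ^ 2 + ‖k * u x‖ ^ 2 ≤
      (‖u' 0‖ ^ 2 + ‖k * u 0‖ ^ 2) * Real.exp ((2 * |k.re| + M) * x) := by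
  set energy : ℝ → ℝ := fun t ↦ ‖u' t‖ ^ 2 + ‖k * u t‖ ^ 2
  set energy' : ℝ → ℝ := fun t ↦
    2 * inner ℝ (u' t) ((q t + k ^ 2) * u t) + 2 * inner ℝ (k * u t) (k * u' t)
  have hderiv (t : ℝ) (ht : t ∈ Icc (0 : ℝ) 1) : HasDerivAt energy (energy' t) t :=
    (hu t ht).2.norm_sq.add ((hu t ht).1.const_mul k).norm_sq
  have henergy (t : ℝ) : ‖energy t‖ = energy t := Real.norm_of_nonneg (by positivity)
  have hbound (t : ℝ) (ht : t ∈ Icc (0 : ℝ) 1) :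
      ‖energy' t‖ ≤ (2 * |k.re| + M) * ‖energy t‖ + 0 := by
    have hsplit : energy' t = 2 * inner ℝ (u' t) (q t * u t) +
        (2 * inner ℝ (u' t) (k * (k * u t)) + 2 * inner ℝ (k * u t) (k * u' t)) := by
      simp only [energy', add_mul, pow_two, mul_assoc, inner_add_right]
      ring
    rw [henergy, hsplit, Real.norm_eq_abs]
    linarith [abs_add_le (2 * inner ℝ (u' t) (q t * u t))
      (2 * inner ℝ (u' t) (k * (k * u t)) + 2 * inner ℝ (k * u t) (k * u' t)),
      abs_inner_mul_le (hM t ht) hk (u t) (u' t), abs_inner_mul_add_inner_mul_le k (u' t) (k * u t)]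
  simpa only [henergy, gronwallBound_ε0, sub_zero] using
    norm_le_gronwallBound_of_norm_deriv_right_le
      (fun t ht ↦ (hderiv t ht).continuousAt.continuousWithinAt)
      (fun t ht ↦ (hderiv t (Ico_subset_Icc_self ht)).hasDerivWithinAt) le_rfl
      (fun t ht ↦ hbound t (Ico_subset_Icc_self ht)) x hx

lemma norm_mul_le (hu : IsSchrodingerSolution q (k ^ 2) u u')
    (hM : ∀ x ∈ Icc (0 : ℝ) 1, ‖q x‖ ≤ M) (hk : 1 ≤ ‖k‖) {C : ℝ} (hC : 0 ≤ C)
    (h0 : ‖u' 0‖ ^ 2 + ‖k * u 0‖ ^ 2 ≤ C ^ 2) (hx : x ∈ Icc (0 : ℝ) 1) :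
    ‖k * u x‖ ≤ C * Real.exp (|k.re| * x + M / 2) := by
  have hM0 : 0 ≤ M := (norm_nonneg _).trans (hM x hx)
  refine le_of_sq_le_sq ?_ (by positivity)
  calc ‖k * u x‖ ^ 2
      ≤ (‖u' 0‖ ^ 2 + ‖k * u 0‖ ^ 2) * Real.exp ((2 * |k.re| + M) * x) :=
        (le_add_of_nonneg_left (sq_nonneg _)).trans (hu.norm_sq_add_norm_sq_le hM hk hx)
    _ ≤ C ^ 2 * Real.exp (2 * (|k.re| * x + M / 2)) := by
        refine mul_le_mul h0 (Real.exp_le_exp.2 ?_) (by positivity) (by positivity)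
        nlinarith [hx.2]
    _ = (C * Real.exp (|k.re| * x + M / 2)) ^ 2 := by
        rw [mul_pow, ← Real.exp_nat_mul, Nat.cast_two]

end IsSchrodingerSolution

namespace FundamentalSystem

variable (Φ : FundamentalSystem q)

lemma norm_mul_s_le (hM : ∀ x ∈ Icc (0 : ℝ) 1, ‖q x‖ ≤ M) (hk : 1 ≤ ‖k‖)
    (hx : x ∈ Icc (0 : ℝ) 1) : ‖k * Φ.s (k ^ 2) x‖ ≤ Real.exp (|k.re| * x + M / 2) := by
  simpa using (Φ.isSolution_s (k ^ 2)).norm_mul_le hM hk zero_le_one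
    (by simp [Φ.s_zero, Φ.s'_zero]) hx

lemma norm_c_le (hM : ∀ x ∈ Icc (0 : ℝ) 1, ‖q x‖ ≤ M) (hk : 1 ≤ ‖k‖)
    (hx : x ∈ Icc (0 : ℝ) 1) : ‖Φ.c (k ^ 2) x‖ ≤ Real.exp (|k.re| * x + M / 2) := by
  have h := (Φ.isSolution_c (k ^ 2)).norm_mul_le hM hk (norm_nonneg k)
    (by simp [Φ.c_zero, Φ.c'_zero]) hx
  rw [norm_mul] at h
  exact le_of_mul_le_mul_left h (by positivity)

lemma norm_mul_dirichlet_le (hM : ∀ x ∈ Icc (0 : ℝ) 1, ‖q x‖ ≤ M) (hk : 1 ≤ ‖k‖)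
    (hx : x ∈ Icc (0 : ℝ) 1) :
    ‖k * Φ.dirichlet (k ^ 2) x‖ ≤ Real.exp (|k.re| * (1 - x) + M / 2) := by
  have hmem {t : ℝ} (ht : t ∈ Icc (0 : ℝ) 1) : 1 - t ∈ Icc (0 : ℝ) 1 :=
    ⟨sub_nonneg.2 ht.2, sub_le_self 1 ht.1⟩
  simpa using (Φ.isSolution_dirichlet (k ^ 2)).comp_one_sub.norm_mul_le
    (fun t ht ↦ hM (1 - t) (hmem ht)) hk zero_le_one
    (by simp [Φ.dirichlet_one, Φ.dirichlet'_one]) (hmem hx)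

lemma norm_mul_s_one_sub_sinh_le (hM : ∀ x ∈ Icc (0 : ℝ) 1, ‖q x‖ ≤ M) (hk : 1 ≤ ‖k‖) :
    ‖k * Φ.s (k ^ 2) 1 - Complex.sinh k‖ ≤ M * Real.exp (|k.re| + M / 2) / ‖k‖ := by
  set g : ℝ → ℂ := fun t ↦ Complex.sinh (k * (1 - t : ℝ)) * Φ.s' (k ^ 2) t +
    k * Complex.cosh (k * (1 - t : ℝ)) * Φ.s (k ^ 2) t
  set g' : ℝ → ℂ := fun t ↦ Complex.sinh (k * (1 - t : ℝ)) * (q t * Φ.s (k ^ 2) t)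
  have hg (t : ℝ) (ht : t ∈ Icc (0 : ℝ) 1) : HasDerivAt g (g' t) t := by
    obtain ⟨hs, hs'⟩ := Φ.isSolution_s (k ^ 2) t ht
    have hlin : HasDerivAt (fun t : ℝ ↦ k * ((1 - t : ℝ) : ℂ)) (-k) t := by
      simpa using ((hasDerivAt_id t).const_sub 1).ofReal_comp.const_mul k
    have hsinh : HasDerivAt (fun t : ℝ ↦ Complex.sinh (k * (1 - t : ℝ)))
        (Complex.cosh (k * (1 - t : ℝ)) * -k) t := (Complex.hasDerivAt_sinh _).comp t hlin
    have hcosh : HasDerivAt (fun t : ℝ ↦ Complex.cosh (k * (1 - t : ℝ)))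
        (Complex.sinh (k * (1 - t : ℝ)) * -k) t := (Complex.hasDerivAt_cosh _).comp t hlin
    exact ((hsinh.mul hs').add ((hcosh.const_mul k).mul hs)).congr_deriv (by ring)
  have hbound (t : ℝ) (ht : t ∈ Icc (0 : ℝ) 1) : ‖g' t‖ ≤ M * Real.exp (|k.re| + M / 2) / ‖k‖ := by
    rw [le_div_iff₀ (by positivity)]
    calc ‖g' t‖ * ‖k‖
        = ‖Complex.sinh (k * (1 - t : ℝ))‖ * (‖q t‖ * ‖k * Φ.s (k ^ 2) t‖) := by
          simp only [g', norm_mul]; ring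
      _ ≤ Real.exp (|k.re| * (1 - t)) * (M * Real.exp (|k.re| * t + M / 2)) := by
          gcongr
          exacts [norm_sinh_mul_ofReal_le k (sub_nonneg.2 ht.2), (norm_nonneg _).trans (hM t ht),
            hM t ht, Φ.norm_mul_s_le hM hk ht]
      _ = M * Real.exp (|k.re| + M / 2) := by
          rw [mul_left_comm, ← Real.exp_add]
          ring_nf
  simpa [g, Φ.s_zero, Φ.s'_zero] using norm_image_sub_le_of_norm_deriv_le_segment_01'
    (fun t ht ↦ (hg t ht).hasDerivWithinAt) (fun t ht ↦ hbound t (Ico_subset_Icc_self ht))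

lemma exp_le_norm_mul_s_one (hM : ∀ x ∈ Icc (0 : ℝ) 1, ‖q x‖ ≤ M)
    (hk : 1 + 8 * M * Real.exp (M / 2) ≤ |k.re|) :
    Real.exp |k.re| / 4 ≤ ‖k * Φ.s (k ^ 2) 1‖ := by
  have hM0 : 0 ≤ M := (norm_nonneg _).trans (hM 0 (left_mem_Icc.2 zero_le_one))
  have hre : 1 ≤ |k.re| := le_trans (le_add_of_nonneg_right (by positivity)) hk
  have hk1 : 1 ≤ ‖k‖ := hre.trans (Complex.abs_re_le_norm k)
  have herror : ‖k * Φ.s (k ^ 2) 1 - Complex.sinh k‖ ≤ Real.exp |k.re| / 8 := by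
    refine (Φ.norm_mul_s_one_sub_sinh_le hM hk1).trans ?_
    rw [Real.exp_add, div_le_iff₀ (by positivity)]
    nlinarith [Real.exp_pos |k.re|, Complex.abs_re_le_norm k]
  have hsinh : 3 / 8 * Real.exp |k.re| ≤ ‖Complex.sinh k‖ := by
    refine le_trans ?_ (sinh_abs_re_le_norm_sinh k)
    have hexp : 2 ≤ Real.exp |k.re| := by linarith [Real.add_one_le_exp |k.re|]
    have hneg : Real.exp (-|k.re|) * Real.exp |k.re| = 1 := by simp [← Real.exp_add]
    rw [Real.sinh_eq]
    nlinarith [Real.exp_pos (-|k.re|)]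
  have := norm_sub_norm_le (Complex.sinh k) (k * Φ.s (k ^ 2) 1)
  rw [norm_sub_rev] at this
  linarith

lemma norm_dirichlet_div_s_one_le (hM : ∀ x ∈ Icc (0 : ℝ) 1, ‖q x‖ ≤ M)
    (hk : 1 + 8 * M * Real.exp (M / 2) ≤ |k.re|) (hx : x ∈ Icc (0 : ℝ) 1) :
    ‖Φ.dirichlet (k ^ 2) x / Φ.s (k ^ 2) 1‖ ≤ 4 * Real.exp (M / 2 - |k.re| * x) := by
  have hM0 : 0 ≤ M := (norm_nonneg _).trans (hM x hx)
  have hk1 : 1 ≤ ‖k‖ := le_trans (le_add_of_nonneg_right (by positivity))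
    (hk.trans (Complex.abs_re_le_norm k))
  calc ‖Φ.dirichlet (k ^ 2) x / Φ.s (k ^ 2) 1‖
      = ‖k * Φ.dirichlet (k ^ 2) x‖ / ‖k * Φ.s (k ^ 2) 1‖ := by
        rw [← norm_div, mul_div_mul_left _ _ (norm_pos_iff.1 (zero_lt_one.trans_le hk1))]
    _ ≤ Real.exp (|k.re| * (1 - x) + M / 2) / (Real.exp |k.re| / 4) := by
        gcongr
        · exact Φ.norm_mul_dirichlet_le hM hk1 hx
        · exact Φ.exp_le_norm_mul_s_one hM hk
    _ = 4 * Real.exp (M / 2 - |k.re| * x) := by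
        rw [div_div_eq_mul_div, mul_comm, mul_div_assoc, ← Real.exp_sub]
        ring_nf

end FundamentalSystem

end Estimates

section InverseProblem

variable {q₁ q₂ : ℝ → ℂ} {k l : ℂ} {M x : ℝ}

namespace FundamentalSystem

variable (Φ₁ : FundamentalSystem q₁) (Φ₂ : FundamentalSystem q₂)

lemma norm_c_mul_s_le (hM₁ : ∀ x ∈ Icc (0 : ℝ) 1, ‖q₁ x‖ ≤ M)
    (hM₂ : ∀ x ∈ Icc (0 : ℝ) 1, ‖q₂ x‖ ≤ M) (hk : 1 ≤ ‖k‖) (hx : x ∈ Icc (0 : ℝ) 1) :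
    ‖Φ₁.c (k ^ 2) x * Φ₂.s (k ^ 2) x‖ ≤ Real.exp M * Real.exp (2 * ‖k‖) := by
  have hs : ‖Φ₂.s (k ^ 2) x‖ ≤ ‖k * Φ₂.s (k ^ 2) x‖ := by
    rw [norm_mul]
    exact le_mul_of_one_le_left (norm_nonneg _) hk
  calc ‖Φ₁.c (k ^ 2) x * Φ₂.s (k ^ 2) x‖
      ≤ Real.exp (|k.re| * x + M / 2) * Real.exp (|k.re| * x + M / 2) :=
        norm_mul_le_of_le (Φ₁.norm_c_le hM₁ hk hx) (hs.trans (Φ₂.norm_mul_s_le hM₂ hk hx))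
    _ ≤ Real.exp M * Real.exp (2 * ‖k‖) := by
        rw [← Real.exp_add, ← Real.exp_add, Real.exp_le_exp]
        nlinarith [hx.2, abs_nonneg k.re, Complex.abs_re_le_norm k]

lemma norm_dirichlet_div_s_one_mul_s_le (hM₁ : ∀ x ∈ Icc (0 : ℝ) 1, ‖q₁ x‖ ≤ M)
    (hM₂ : ∀ x ∈ Icc (0 : ℝ) 1, ‖q₂ x‖ ≤ M) (hk : 1 + 8 * M * Real.exp (M / 2) ≤ |k.re|)
    (hx : x ∈ Icc (0 : ℝ) 1) :
    ‖Φ₁.dirichlet (k ^ 2) x / Φ₁.s (k ^ 2) 1 * Φ₂.s (k ^ 2) x‖ ≤ 4 * Real.exp M / ‖k‖ := by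
  have hM0 : 0 ≤ M := (norm_nonneg _).trans (hM₁ x hx)
  have hk1 : 1 ≤ ‖k‖ := le_trans (le_add_of_nonneg_right (by positivity))
    (hk.trans (Complex.abs_re_le_norm k))
  rw [le_div_iff₀ (zero_lt_one.trans_le hk1)]
  calc ‖Φ₁.dirichlet (k ^ 2) x / Φ₁.s (k ^ 2) 1 * Φ₂.s (k ^ 2) x‖ * ‖k‖
      = ‖Φ₁.dirichlet (k ^ 2) x / Φ₁.s (k ^ 2) 1‖ * ‖k * Φ₂.s (k ^ 2) x‖ := by
        simp only [norm_mul]; ring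
    _ ≤ 4 * Real.exp (M / 2 - |k.re| * x) * Real.exp (|k.re| * x + M / 2) := by
        gcongr
        exacts [Φ₁.norm_dirichlet_div_s_one_le hM₁ hk hx, Φ₂.norm_mul_s_le hM₂ hk1 hx]
    _ = 4 * Real.exp M := by
        rw [mul_assoc, ← Real.exp_add]
        ring_nf

lemma s_one_ne_zero {q : ℝ → ℂ} (Φ : FundamentalSystem q) (hM : ∀ x ∈ Icc (0 : ℝ) 1, ‖q x‖ ≤ M)
    (hk : 1 + 8 * M * Real.exp (M / 2) ≤ |k.re|) : Φ.s (k ^ 2) 1 ≠ 0 := by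
  have hpos : 0 < ‖k * Φ.s (k ^ 2) 1‖ :=
    lt_of_lt_of_le (by positivity) (Φ.exp_le_norm_mul_s_one hM hk)
  exact right_ne_zero_of_mul (norm_pos_iff.1 hpos)

theorem c_mul_s_eq (hM₁ : ∀ x ∈ Icc (0 : ℝ) 1, ‖q₁ x‖ ≤ M) (hM₂ : ∀ x ∈ Icc (0 : ℝ) 1, ‖q₂ x‖ ≤ M)
    (h : ∀ l, Φ₁.c l 1 * Φ₂.s l 1 = Φ₂.c l 1 * Φ₁.s l 1) (l : ℂ) (hx : x ∈ Icc (0 : ℝ) 1) :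
    Φ₁.c l x * Φ₂.s l x = Φ₂.c l x * Φ₁.s l x := by
  refine sub_eq_zero.1 (eq_zero_of_norm_apply_sq_le
    (f := fun l ↦ Φ₁.c l x * Φ₂.s l x - Φ₂.c l x * Φ₁.s l x)
    (((Φ₁.differentiable_c x hx).mul (Φ₂.differentiable_s x hx)).sub
      ((Φ₂.differentiable_c x hx).mul (Φ₁.differentiable_s x hx)))
    (A := 2 * Real.exp M) (B := 2) (C := 8 * Real.exp M) (K := 1 + 8 * M * Real.exp (M / 2))
    (fun k hk ↦ ?_) (fun k hk ↦ ?_) l)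
  · linarith [norm_sub_le (Φ₁.c (k ^ 2) x * Φ₂.s (k ^ 2) x) (Φ₂.c (k ^ 2) x * Φ₁.s (k ^ 2) x),
      norm_c_mul_s_le Φ₁ Φ₂ hM₁ hM₂ hk hx, norm_c_mul_s_le Φ₂ Φ₁ hM₂ hM₁ hk hx]
  · have h₁ := Φ₁.s_one_ne_zero hM₁ hk
    have h₂ := Φ₂.s_one_ne_zero hM₂ hk
    have hweyl : Φ₁.c (k ^ 2) x * Φ₂.s (k ^ 2) x - Φ₂.c (k ^ 2) x * Φ₁.s (k ^ 2) x =
        Φ₁.dirichlet (k ^ 2) x / Φ₁.s (k ^ 2) 1 * Φ₂.s (k ^ 2) x -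
          Φ₂.dirichlet (k ^ 2) x / Φ₂.s (k ^ 2) 1 * Φ₁.s (k ^ 2) x := by
      rw [dirichlet, dirichlet]
      field_simp
      linear_combination Φ₁.s (k ^ 2) x * Φ₂.s (k ^ 2) x * h (k ^ 2)
    calc _ ≤ 4 * Real.exp M / ‖k‖ + 4 * Real.exp M / ‖k‖ := by
          rw [hweyl]
          exact norm_sub_le_of_le (norm_dirichlet_div_s_one_mul_s_le Φ₁ Φ₂ hM₁ hM₂ hk hx)
            (norm_dirichlet_div_s_one_mul_s_le Φ₂ Φ₁ hM₂ hM₁ hk hx)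
      _ = 8 * Real.exp M / ‖k‖ := by ring

lemma s_ne_zero_nhdsNE {q : ℝ → ℂ} (Φ : FundamentalSystem q) (l : ℂ) (hx : x ∈ Icc (0 : ℝ) 1) :
    ∀ᶠ t in 𝓝[≠] x, Φ.s l t ≠ 0 := by
  by_cases hs : Φ.s l x = 0
  · have hs' : Φ.s' l x ≠ 0 := fun hs' ↦ by simpa [hs, hs'] using Φ.wronskian_eq_one l hx
    simpa [hs] using (Φ.isSolution_s l x hx).1.eventually_ne hs' (c := 0)
  · exact eventually_nhdsWithin_of_eventually_nhds
      ((Φ.isSolution_s l x hx).1.continuousAt.eventually_ne hs)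

end FundamentalSystem

lemma derivative_eq_of_eqOn {F : Type*} [NormedAddCommGroup F] [NormedSpace ℝ F] {f g : ℝ → F}
    {f' g' : F} {t : Set ℝ} (ht : UniqueDiffWithinAt ℝ t x) (hx : x ∈ t) (h : EqOn f g t)
    (hf : HasDerivAt f f' x) (hg : HasDerivAt g g' x) : f' = g' :=
  ht.eq_deriv t hf.hasDerivWithinAt (hg.hasDerivWithinAt.congr h (h hx))

lemma IsSchrodingerSolution.potential_eq_of_sq_eq {u u' v v' : ℝ → ℂ}
    (hu : IsSchrodingerSolution q₁ l u u') (hv : IsSchrodingerSolution q₂ l v v')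
    (hsq : EqOn (u ^ 2) (v ^ 2) (Icc 0 1)) (hx : x ∈ Icc (0 : ℝ) 1) (hux : u x ≠ 0) :
    q₁ x = q₂ x := by
  have hunique := uniqueDiffOn_Icc (zero_lt_one' ℝ)
  have hmul : EqOn (fun x ↦ u x * u' x) (fun x ↦ v x * v' x) (Icc 0 1) := fun t ht ↦ by
    have := derivative_eq_of_eqOn (hunique t ht) ht hsq ((hu t ht).1.pow 2) ((hv t ht).1.pow 2)
    linear_combination this / 2
  have hderiv := derivative_eq_of_eqOn (hunique x hx) hx hmul
    ((hu x hx).1.mul (hu x hx).2) ((hv x hx).1.mul (hv x hx).2)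
  have hsqx : u x ^ 2 = v x ^ 2 := hsq hx
  have hmulx : u x * u' x = v x * v' x := hmul hx
  refine sub_eq_zero.1 ((mul_eq_zero_iff_right (pow_ne_zero 4 hux)).1 ?_)
  linear_combination u x ^ 2 * hderiv - (u x * u' x + v x * v' x) * hmulx +
    (v' x ^ 2 - u x ^ 2 * (q₂ x + l)) * hsqx

namespace FundamentalSystem

variable (Φ₁ : FundamentalSystem q₁) (Φ₂ : FundamentalSystem q₂)

lemma sq_s_eq_of_c_mul_s_eq
    (h : EqOn (Φ₁.c l * Φ₂.s l) (Φ₂.c l * Φ₁.s l) (Icc 0 1)) :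
    EqOn (Φ₁.s l ^ 2) (Φ₂.s l ^ 2) (Icc 0 1) := fun x hx ↦ by
  have hderiv := derivative_eq_of_eqOn (uniqueDiffOn_Icc zero_lt_one x hx) hx h
    ((Φ₁.isSolution_c l x hx).1.mul (Φ₂.isSolution_s l x hx).1)
    ((Φ₂.isSolution_c l x hx).1.mul (Φ₁.isSolution_s l x hx).1)
  have hx' : Φ₁.c l x * Φ₂.s l x = Φ₂.c l x * Φ₁.s l x := h hx
  simp only [Pi.pow_apply]
  linear_combination Φ₁.s l x * Φ₂.s l x * hderiv + Φ₂.s l x ^ 2 * Φ₁.wronskian_eq_one l hx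
    - Φ₁.s l x ^ 2 * Φ₂.wronskian_eq_one l hx
    - (Φ₂.s l x * Φ₁.s' l x + Φ₁.s l x * Φ₂.s' l x) * hx'

theorem potential_eq_of_c_mul_s_eq (hq₁ : ContinuousOn q₁ (Icc 0 1))
    (hq₂ : ContinuousOn q₂ (Icc 0 1))
    (h : EqOn (Φ₁.c l * Φ₂.s l) (Φ₂.c l * Φ₁.s l) (Icc 0 1)) : EqOn q₁ q₂ (Icc 0 1) := by
  intro x hx
  have hne : (𝓝[Icc 0 1 \ {x}] x).NeBot :=
    accPt_principal_iff_nhdsWithin.1 (uniqueDiffOn_Icc zero_lt_one x hx).accPt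
  have heq : q₁ =ᶠ[𝓝[Icc 0 1 \ {x}] x] q₂ := by
    filter_upwards [self_mem_nhdsWithin,
      nhdsWithin_mono x (sdiff_subset_compl _ _) (Φ₁.s_ne_zero_nhdsNE l hx)] with t ht hst
    exact (Φ₁.isSolution_s l).potential_eq_of_sq_eq (Φ₂.isSolution_s l)
      (sq_s_eq_of_c_mul_s_eq Φ₁ Φ₂ h) ht.1 hst
  exact tendsto_nhds_unique_of_eventuallyEq ((hq₁ x hx).mono sdiff_subset)
    ((hq₂ x hx).mono sdiff_subset) heq

lemma isSolution_dirichlet_one_sub {q : ℝ → ℂ} (Φ : FundamentalSystem fun x ↦ q (1 - x)) (l : ℂ) :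
    IsSchrodingerSolution q l (fun x ↦ Φ.dirichlet l (1 - x))
      (fun x ↦ -Φ.dirichlet' l (1 - x)) := by
  simpa using (Φ.isSolution_dirichlet l).comp_one_sub

theorem potential_eq_of_accPt (hq₁ : ContinuousOn q₁ (Icc 0 1)) (hq₂ : ContinuousOn q₂ (Icc 0 1))
    {S : Set ℂ} {p : ℂ} (hp : AccPt p (𝓟 S))
    (h : ∀ l ∈ S, Φ₁.c l 1 * Φ₂.s l 1 = Φ₂.c l 1 * Φ₁.s l 1) : EqOn q₁ q₂ (Icc 0 1) := by
  have hone : (1 : ℝ) ∈ Icc (0 : ℝ) 1 := right_mem_Icc.2 zero_le_one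
  have hratio := eq_of_accPt_of_eqOn ((Φ₁.differentiable_c 1 hone).mul (Φ₂.differentiable_s 1 hone))
    ((Φ₂.differentiable_c 1 hone).mul (Φ₁.differentiable_s 1 hone)) hp h
  obtain ⟨M₁, hM₁⟩ := isCompact_Icc.exists_bound_of_continuousOn hq₁
  obtain ⟨M₂, hM₂⟩ := isCompact_Icc.exists_bound_of_continuousOn hq₂
  exact potential_eq_of_c_mul_s_eq Φ₁ Φ₂ (l := 0) hq₁ hq₂ fun x hx ↦
    c_mul_s_eq Φ₁ Φ₂ (fun x hx ↦ (hM₁ x hx).trans (le_max_left M₁ M₂))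
      (fun x hx ↦ (hM₂ x hx).trans (le_max_right M₁ M₂)) (congrFun hratio) 0 hx

end FundamentalSystem

theorem weyl_ratio_on_accumulating_set_determines_potential_general
    (hq₁ : ContinuousOn q₁ (Icc 0 1)) (hq₂ : ContinuousOn q₂ (Icc 0 1))
    {S : Set ℂ} (hS : ∃ p, AccPt p (𝓟 S))
    (h : ∀ l ∈ S, ∀ φ₁ φ₁' φ₂ φ₂' : ℝ → ℂ,
      IsSchrodingerSolution q₁ l φ₁ φ₁' → φ₁ 0 = 0 → φ₁' 0 = 1 →
      IsSchrodingerSolution q₂ l φ₂ φ₂' → φ₂ 0 = 0 → φ₂' 0 = 1 →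
      φ₁' 1 * φ₂ 1 = φ₂' 1 * φ₁ 1) :
    EqOn q₁ q₂ (Icc 0 1) := by
  have hmaps : MapsTo (fun x : ℝ ↦ 1 - x) (Icc 0 1) (Icc 0 1) := fun x hx ↦
    ⟨sub_nonneg.2 hx.2, sub_le_self 1 hx.1⟩
  have hreflect {q : ℝ → ℂ} (hq : ContinuousOn q (Icc 0 1)) :
      ContinuousOn (fun x ↦ q (1 - x)) (Icc 0 1) := hq.comp (by fun_prop) hmaps
  obtain ⟨p, hp⟩ := hS
  obtain ⟨Φ₁⟩ := FundamentalSystem.nonempty (hreflect hq₁)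
  obtain ⟨Φ₂⟩ := FundamentalSystem.nonempty (hreflect hq₂)
  have hratio (l : ℂ) (hl : l ∈ S) : Φ₁.c l 1 * Φ₂.s l 1 = Φ₂.c l 1 * Φ₁.s l 1 := by
    simpa [Φ₁.dirichlet_zero, Φ₂.dirichlet_zero, Φ₁.dirichlet'_zero, Φ₂.dirichlet'_zero] using
      h l hl _ _ _ _
        (Φ₁.isSolution_dirichlet_one_sub l) (by simp [Φ₁.dirichlet_one])
        (by simp [Φ₁.dirichlet'_one])
        (Φ₂.isSolution_dirichlet_one_sub l) (by simp [Φ₂.dirichlet_one])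
        (by simp [Φ₂.dirichlet'_one])
  intro x hx
  simpa using Φ₁.potential_eq_of_accPt Φ₂ (hreflect hq₁) (hreflect hq₂) hp hratio (hmaps hx)

end InverseProblem

section RealPotential

variable {q : ℝ → ℝ} {l : ℝ}

lemma IsSLSolution.ofReal {φ φ' : ℝ → ℝ} (hφ : IsSLSolution q (-l) φ φ') :
    IsSchrodingerSolution (fun x ↦ (q x : ℂ)) l (fun x ↦ (φ x : ℂ)) (fun x ↦ (φ' x : ℂ)) :=
  fun x hx ↦ ⟨(hφ.1 x hx).ofReal_comp, (hφ.2.1 x hx).ofReal_comp.congr_deriv (by push_cast; ring)⟩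

lemma IsSchrodingerSolution.isSLSolution_re {u u' : ℝ → ℂ}
    (hu : IsSchrodingerSolution (fun x ↦ (q x : ℂ)) l u u') (h0 : u 0 = 0) (h0' : u' 0 = 1) :
    IsSLSolution q (-l) (fun x ↦ (u x).re) (fun x ↦ (u' x).re) := by
  have hre {f : ℝ → ℂ} {f' : ℂ} {x : ℝ} (hf : HasDerivAt f f' x) :
      HasDerivAt (fun x ↦ (f x).re) f'.re x := Complex.reCLM.hasFDerivAt.comp_hasDerivAt x hf
  refine ⟨fun x hx ↦ hre (hu x hx).1, fun x hx ↦ (hre (hu x hx).2).congr_deriv ?_, by simp [h0],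
    by simp [h0']⟩
  simp [← Complex.ofReal_add]
  ring

lemma IsSchrodingerSolution.exists_isSLSolution (hq : ContinuousOn q (Icc 0 1)) {u u' : ℝ → ℂ}
    (hu : IsSchrodingerSolution (fun x ↦ (q x : ℂ)) l u u') (h0 : u 0 = 0) (h0' : u' 0 = 1) :
    ∃ φ φ' : ℝ → ℝ, IsSLSolution q (-l) φ φ' ∧
      ∀ x ∈ Icc (0 : ℝ) 1, u x = φ x ∧ u' x = φ' x := by
  have hre := hu.isSLSolution_re h0 h0'
  exact ⟨_, _, hre, fun x hx ↦ hu.eq_of_eq_at_zero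
    (Complex.continuous_ofReal.comp_continuousOn hq) hre.ofReal (by simp [h0]) (by simp [h0']) hx⟩

lemma weyl_ratio_eq_of_forall_isSLSolution {q₁ q₂ : ℝ → ℝ} (hq₁ : ContinuousOn q₁ (Icc 0 1))
    (hq₂ : ContinuousOn q₂ (Icc 0 1))
    (h : ∀ φ₁ φ₁' φ₂ φ₂' : ℝ → ℝ, IsSLSolution q₁ (-l) φ₁ φ₁' → IsSLSolution q₂ (-l) φ₂ φ₂' →
      φ₁' 1 * φ₂ 1 = φ₂' 1 * φ₁ 1)
    {u₁ u₁' u₂ u₂' : ℝ → ℂ}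
    (hu₁ : IsSchrodingerSolution (fun x ↦ (q₁ x : ℂ)) l u₁ u₁') (h₁ : u₁ 0 = 0) (h₁' : u₁' 0 = 1)
    (hu₂ : IsSchrodingerSolution (fun x ↦ (q₂ x : ℂ)) l u₂ u₂') (h₂ : u₂ 0 = 0) (h₂' : u₂' 0 = 1) :
    u₁' 1 * u₂ 1 = u₂' 1 * u₁ 1 := by
  have hone : (1 : ℝ) ∈ Icc (0 : ℝ) 1 := right_mem_Icc.2 zero_le_one
  obtain ⟨φ₁, φ₁', hφ₁, heq₁⟩ := hu₁.exists_isSLSolution hq₁ h₁ h₁'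
  obtain ⟨φ₂, φ₂', hφ₂, heq₂⟩ := hu₂.exists_isSLSolution hq₂ h₂ h₂'
  rw [(heq₁ 1 hone).1, (heq₁ 1 hone).2, (heq₂ 1 hone).1, (heq₂ 1 hone).2]
  exact_mod_cast h φ₁ φ₁' φ₂ φ₂' hφ₁ hφ₂

lemma exists_accPt_image_ofReal {S : Set ℝ} (hS : ∃ p : ℝ, AccPt p (𝓟 S)) :
    ∃ p : ℂ, AccPt p (𝓟 (Complex.ofReal '' S)) := by
  obtain ⟨p, hp⟩ := hS
  exact ⟨p, by simpa using hp.map Complex.continuous_ofReal.continuousAt Complex.ofReal_injective⟩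

end RealPotential

/-- if the Weyl-type ratios `φ'(1,-λ;q)/φ(1,-λ;q)` of two continuous
potentials agree on an infinite set of positive `λ` with a finite accumulation
point, then the potentials coincide on `[0,1]`. -/
theorem weyl_ratio_on_accumulating_set_determines_potential
    (q1 q2 : ℝ → ℝ)
    (hq1 : ContinuousOn q1 (Set.Icc 0 1)) (hq2 : ContinuousOn q2 (Set.Icc 0 1))
    (S : Set ℝ) (hSpos : S ⊆ Set.Ioi 0) (hSinf : S.Infinite)
    (hSacc : ∃ p : ℝ, AccPt p (Filter.principal S))
    (h : ∀ lam ∈ S, ∀ φ1 φ1' φ2 φ2' : ℝ → ℝ,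
        IsSLSolution q1 (-lam) φ1 φ1' → IsSLSolution q2 (-lam) φ2 φ2' →
        φ1' 1 * φ2 1 = φ2' 1 * φ1 1) :
    ∀ x ∈ Set.Icc (0:ℝ) 1, q1 x = q2 x := by
  exact fun x hx ↦ Complex.ofReal_injective <|
    weyl_ratio_on_accumulating_set_determines_potential_general
      (Complex.continuous_ofReal.comp_continuousOn hq1)
      (Complex.continuous_ofReal.comp_continuousOn hq2) (exists_accPt_image_ofReal hSacc)
      (forall_mem_image.2 fun l hl _ _ _ _ ↦
        weyl_ratio_eq_of_forall_isSLSolution hq1 hq2 (h l hl)) hx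
end
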